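/- Let X be a locally connected continuum contained in the Euclidean plane ℝ². If X has the weak local periodic point property (wLPPP), then X has the local fixed point property (LFPP). -/

import Mathlib

/-- A space has the fixed point property: every continuous self-map has a fixed point. -/
def HasFPP (Y : Type*) [TopologicalSpace Y] : Prop :=
  ∀ f : Y → Y, Continuous f → ∃ x, f x = x

/-- A space has the periodic point property: every continuous self-map has a periodic point. -/
def HasPPP (Y : Type*) [TopologicalSpace Y] : Prop :=
  ∀ f : Y → Y, Continuous f → ∃ x, ∃ n : ℕ, 1 ≤ n ∧ f^[n] x = x

/-- Local fixed point property: there is an open basis whose members have closures with FPP. -/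
def HasLFPP (Y : Type*) [TopologicalSpace Y] : Prop :=
  ∃ 𝓑 : Set (Set Y), TopologicalSpace.IsTopologicalBasis 𝓑 ∧
    ∀ B ∈ 𝓑, HasFPP ↥(closure B)

/-- Weak local fixed point property. -/
def HasWLFPP (Y : Type*) [TopologicalSpace Y] : Prop :=
  ∃ 𝓑 : Set (Set Y), TopologicalSpace.IsTopologicalBasis 𝓑 ∧
    ∀ B ∈ 𝓑, ∀ f : Y → Y, Continuous f → f '' closure B ⊆ B → ∃ x ∈ B, f x = x

/-- Local periodic point property. -/
def HasLPPP (Y : Type*) [TopologicalSpace Y] : Prop :=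
  ∃ 𝓑 : Set (Set Y), TopologicalSpace.IsTopologicalBasis 𝓑 ∧
    ∀ B ∈ 𝓑, HasPPP ↥(closure B)

/-- Weak local periodic point property. -/
def HasWLPPP (Y : Type*) [TopologicalSpace Y] : Prop :=
  ∃ 𝓑 : Set (Set Y), TopologicalSpace.IsTopologicalBasis 𝓑 ∧
    ∀ B ∈ 𝓑, ∀ f : Y → Y, Continuous f → f '' closure B ⊆ B →
      ∃ x ∈ B, ∃ n : ℕ, 1 ≤ n ∧ f^[n] x = x

/-- A subset is a simple closed curve if it is homeomorphic to the unit circle. -/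
def IsSimpleClosedCurve {α : Type*} [TopologicalSpace α] (S : Set α) : Prop :=
  Nonempty (↥S ≃ₜ ↥(Metric.sphere (0 : EuclideanSpace ℝ (Fin 2)) 1))

/-- Covering dimension at most `n`: every finite open cover admits an open shrinking
of order at most `n + 1`. -/
def CoveringDimLE (Y : Type*) [TopologicalSpace Y] (n : ℕ) : Prop :=
  ∀ (ι : Type) [Finite ι] (U : ι → Set Y), (∀ i, IsOpen (U i)) → (⋃ i, U i) = Set.univ →
    ∃ V : ι → Set Y, (∀ i, IsOpen (V i)) ∧ (∀ i, V i ⊆ U i) ∧ (⋃ i, V i) = Set.univ ∧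
      ∀ y : Y, {i | y ∈ V i}.ncard ≤ n + 1

/-- A dendrite: a locally connected (metric) continuum containing no simple closed curve. -/
def IsDendrite {α : Type*} [TopologicalSpace α] (D : Set α) : Prop :=
  IsCompact D ∧ IsConnected D ∧ LocallyConnectedSpace ↥D ∧ ∀ S ⊆ D, ¬ IsSimpleClosedCurve S

/-- A local dendrite: every point has a closed neighborhood which is a dendrite. -/
def IsLocalDendrite (Y : Type*) [TopologicalSpace Y] : Prop :=
  ∀ y : Y, ∃ N : Set Y, N ∈ nhds y ∧ IsClosed N ∧ IsDendrite N

open Set Metric Topology Filter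

/-- `u` has a continuous logarithm on `K`. -/
def HasLog (u : ℂ → ℂ) (K : Set ℂ) : Prop :=
  ∃ l : ℂ → ℂ, ContinuousOn l K ∧ ∀ z ∈ K, u z = Complex.exp (l z)

namespace HasLog

theorem congr {u v : ℂ → ℂ} {K : Set ℂ} (h : HasLog u K) (huv : ∀ z ∈ K, v z = u z) :
    HasLog v K := by
  obtain ⟨l, hl, he⟩ := h
  exact ⟨l, hl, fun z hz => (huv z hz).trans (he z hz)⟩

theorem mono {u : ℂ → ℂ} {K K' : Set ℂ} (h : HasLog u K) (hK : K' ⊆ K) : HasLog u K' := by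
  obtain ⟨l, hl, he⟩ := h
  exact ⟨l, hl.mono hK, fun z hz => he z (hK hz)⟩

theorem mul {u v : ℂ → ℂ} {K : Set ℂ} (hu : HasLog u K) (hv : HasLog v K) :
    HasLog (fun z => u z * v z) K := by
  obtain ⟨l, hl, he⟩ := hu
  obtain ⟨m, hm, hf⟩ := hv
  exact ⟨fun z => l z + m z, hl.add hm, fun z hz => by
    simp only [he z hz, hf z hz, Complex.exp_add]⟩

theorem inv {u : ℂ → ℂ} {K : Set ℂ} (hu : HasLog u K) :
    HasLog (fun z => (u z)⁻¹) K := by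
  obtain ⟨l, hl, he⟩ := hu
  exact ⟨fun z => - l z, hl.neg, fun z hz => by
    simp only [he z hz, Complex.exp_neg]⟩

theorem zpow {u : ℂ → ℂ} {K : Set ℂ} (hu : HasLog u K) (n : ℤ) :
    HasLog (fun z => (u z) ^ n) K := by
  obtain ⟨l, hl, he⟩ := hu
  exact ⟨fun z => n * l z, continuousOn_const.mul hl, fun z hz => by
    simp only [he z hz, Complex.exp_int_mul]⟩

theorem ne_zero {u : ℂ → ℂ} {K : Set ℂ} (hu : HasLog u K) {z : ℂ} (hz : z ∈ K) : u z ≠ 0 := by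
  obtain ⟨l, hl, he⟩ := hu
  rw [he z hz]; exact Complex.exp_ne_zero _

theorem const {c : ℂ} (hc : c ≠ 0) (K : Set ℂ) : HasLog (fun _ => c) K :=
  ⟨fun _ => Complex.log c, continuousOn_const, fun _ _ => (Complex.exp_log hc).symm⟩

theorem prod {ι : Type*} (s : Finset ι) {u : ι → ℂ → ℂ} {K : Set ℂ}
    (h : ∀ i ∈ s, HasLog (u i) K) : HasLog (fun z => ∏ i ∈ s, u i z) K := by
  classical
  induction s using Finset.induction_on with
  | empty => simpa using const one_ne_zero K
  | insert a s ha ih =>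
    have h1 := h a (Finset.mem_insert_self a s)
    have h2 := ih fun i hi => h i (Finset.mem_insert_of_mem hi)
    exact (h1.mul h2).congr fun z _ => Finset.prod_insert ha

theorem of_near_one {u : ℂ → ℂ} {K : Set ℂ} (hu : ContinuousOn u K)
    (h : ∀ z ∈ K, ‖u z - 1‖ < 1) : HasLog u K := by
  have hs : ∀ z ∈ K, u z ∈ Complex.slitPlane := fun z hz => by
    have := Complex.mem_slitPlane_of_norm_lt_one (h z hz)
    simpa using this
  exact ⟨fun z => Complex.log (u z), hu.clog hs, fun z hz =>
    (Complex.exp_log (Complex.slitPlane_ne_zero (hs z hz))).symm⟩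

theorem of_near {u v : ℂ → ℂ} {K : Set ℂ} (hu : ContinuousOn u K) (hv : ContinuousOn v K)
    (h : ∀ z ∈ K, ‖u z - v z‖ < ‖v z‖) : HasLog (fun z => u z / v z) K := by
  have h0 : ∀ z ∈ K, v z ≠ 0 := fun z hz => by
    have := (norm_nonneg _).trans_lt (h z hz)
    exact norm_pos_iff.mp this
  refine of_near_one (hu.div hv h0) fun z hz => ?_
  rw [div_sub_one (h0 z hz), norm_div, div_lt_one (norm_pos_iff.mpr (h0 z hz))]
  exact h z hz

theorem exists_continuous {u : ℂ → ℂ} {K : Set ℂ} (hK : IsClosed K) (hu : HasLog u K) :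
    ∃ l : ℂ → ℂ, Continuous l ∧ ∀ z ∈ K, u z = Complex.exp (l z) := by
  obtain ⟨l, hl, he⟩ := hu
  obtain ⟨g, hg⟩ := ContinuousMap.exists_restrict_eq hK ⟨K.domRestrict l, continuousOn_iff_continuous_domRestrict.mp hl⟩
  refine ⟨g, g.continuous, fun z hz => ?_⟩
  have : g z = l z := by simpa using DFunLike.congr_fun hg ⟨z, hz⟩
  rw [this, he z hz]

end HasLog

theorem extend_continuousOn {K : Set ℂ} (hK : IsClosed K) {l : ℂ → ℂ} (hl : ContinuousOn l K) :
    ∃ g : ℂ → ℂ, Continuous g ∧ ∀ z ∈ K, g z = l z := by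
  obtain ⟨g, hg⟩ := ContinuousMap.exists_restrict_eq hK ⟨K.domRestrict l, continuousOn_iff_continuous_domRestrict.mp hl⟩
  exact ⟨g, g.continuous, fun z hz => by simpa using DFunLike.congr_fun hg ⟨z, hz⟩⟩

theorem hasLog_convex {U : Set ℂ} (hU : Convex ℝ U) (hUo : IsOpen U) (hne : U.Nonempty)
    {g : ℂ → ℂ} (hg : ContinuousOn g U) (h0 : ∀ z ∈ U, g z ≠ 0) : HasLog g U := by
  have hs : IsSimplyConnected U := by
    have : ContractibleSpace U := hU.contractibleSpace hne
    unfold IsSimplyConnected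
    infer_instance
  obtain ⟨f, hf, he⟩ := Complex.exists_continuousOn_eqOn_exp_comp hs hUo hg
    (by rintro ⟨z, hz, h⟩; exact h0 z hz h)
  exact ⟨f, hf, fun z hz => (he hz).symm⟩

theorem log_univ {g : ℂ → ℂ} (hg : Continuous g) (h0 : ∀ z, g z ≠ 0) :
    ∃ l : ℂ → ℂ, Continuous l ∧ ∀ z, g z = Complex.exp (l z) := by
  obtain ⟨l, hl, he⟩ := hasLog_convex convex_univ isOpen_univ univ_nonempty hg.continuousOn
    (fun z _ => h0 z)
  exact ⟨l, continuousOn_univ.mp hl, fun z => he z trivial⟩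

theorem log_real {g : ℝ → ℂ} (hg : Continuous g) (h0 : ∀ z, g z ≠ 0) :
    ∃ l : ℝ → ℂ, Continuous l ∧ ∀ z, g z = Complex.exp (l z) := by
  have hs : IsSimplyConnected (univ : Set ℝ) := by
    have : ContractibleSpace (univ : Set ℝ) := convex_univ.contractibleSpace univ_nonempty
    unfold IsSimplyConnected
    infer_instance
  obtain ⟨f, hf, he⟩ := Complex.exists_continuousOn_eqOn_exp_comp hs isOpen_univ hg.continuousOn
    (by rintro ⟨z, hz, h⟩; exact h0 z h)
  exact ⟨f, continuousOn_univ.mp hf, fun z => (he trivial).symm⟩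

/-- Two logarithms of the same function on a preconnected set differ by a constant. -/
theorem log_unique {Y : Type*} [TopologicalSpace Y] {C : Set Y} (hC : IsPreconnected C)
    {L M : Y → ℂ} (hL : ContinuousOn L C) (hM : ContinuousOn M C)
    (h : ∀ y ∈ C, Complex.exp (L y) = Complex.exp (M y)) {x y : Y} (hx : x ∈ C) (hy : y ∈ C) :
    L x - M x = L y - M y := by
  have hd : ContinuousOn (fun y => ((L y - M y) / (2 * Real.pi * Complex.I)).re) C :=
    Complex.continuous_re.comp_continuousOn ((hL.sub hM).div_const _)
  have hn : ∀ y ∈ C, ∃ n : ℤ, L y - M y = n * (2 * Real.pi * Complex.I) := fun y hy => by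
    obtain ⟨n, hn⟩ := Complex.exp_eq_exp_iff_exists_int.mp (h y hy)
    exact ⟨n, by rw [hn]; ring⟩
  have hre : ∀ y (n : ℤ), L y - M y = n * (2 * Real.pi * Complex.I) →
      ((L y - M y) / (2 * Real.pi * Complex.I)).re = n := fun y n hy => by
    rw [hy, mul_div_cancel_right₀ _ Complex.two_pi_I_ne_zero]; simp
  have hm : MapsTo (fun y => ((L y - M y) / (2 * Real.pi * Complex.I)).re) C
      (range ((↑) : ℤ → ℝ)) := fun y hy => by
    obtain ⟨n, hn⟩ := hn y hy
    exact ⟨n, (hre y n hn).symm⟩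
  have : DiscreteTopology (range ((↑) : ℤ → ℝ)) :=
    (Int.isClosedEmbedding_coe_real.isEmbedding.toHomeomorph).symm.isEmbedding.discreteTopology
  have key := hC.constant_of_mapsTo ⟨this⟩ hd hm hx hy
  obtain ⟨n, h1⟩ := hn x hx
  obtain ⟨m, h2⟩ := hn y hy
  simp only [hre x n h1, hre y m h2, Int.cast_inj] at key
  rw [h1, h2, key]

theorem no_log_sphere {c : ℂ} {R : ℝ} (hR : 0 < R) {n : ℤ}
    (h : HasLog (fun z => (z - c) ^ n) (sphere c R)) : n = 0 := by
  obtain ⟨l, hl, he⟩ := h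
  have hmem : ∀ t : ℝ, c + R * Complex.exp (t * Complex.I) ∈ sphere c R := fun t => by
    simp [Complex.norm_exp_ofReal_mul_I, abs_of_pos hR]
  have h1 := log_unique (C := (univ : Set ℝ)) isPreconnected_univ
    (L := fun t => l (c + R * Complex.exp (t * Complex.I)))
    (M := fun t => n * (Real.log R + t * Complex.I))
    (hl.comp (by fun_prop) (fun t _ => hmem t)) (by fun_prop)
    (fun t _ => by
      rw [← he _ (hmem t)]
      simp only [add_sub_cancel_left]
      rw [Complex.exp_int_mul, Complex.exp_add, ← Complex.ofReal_exp, Real.exp_log hR])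
    (mem_univ 0) (mem_univ (2 * Real.pi))
  have h2 : Complex.exp (((2 * Real.pi : ℝ) : ℂ) * Complex.I) = 1 := by
    push_cast; exact Complex.exp_two_pi_mul_I
  simp only [h2] at h1
  simp at h1
  exact h1

/-- moving the base point a little does not change the existence of logarithms -/
theorem hasLog_near {K : Set ℂ} (hK : IsClosed K) {p : ℂ} (hp : p ∉ K) :
    ∃ ε > 0, ∀ q, dist q p < ε → q ∉ K ∧ HasLog (fun z => (z - q) / (z - p)) K ∧
      HasLog (fun z => (z - p) / (z - q)) K := by
  obtain ⟨ε, hε, hb⟩ := Metric.isOpen_iff.mp hK.isOpen_compl p hp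
  refine ⟨ε, hε, fun q hq => ?_⟩
  have h1 : HasLog (fun z => (z - q) / (z - p)) K := by
    refine HasLog.of_near (by fun_prop) (by fun_prop) fun z hz => ?_
    have : ¬ dist z p < ε := fun h => hb h hz
    rw [dist_eq_norm] at this hq
    have e : z - q - (z - p) = - (q - p) := by ring
    rw [e, norm_neg]; linarith
  exact ⟨hb hq, h1, h1.inv.congr fun z hz => by rw [inv_div]⟩

theorem isOpen_log {K : Set ℂ} (hK : IsClosed K) (u : ℂ → ℂ) :
    IsOpen {q | q ∉ K ∧ HasLog (fun z => u z * (z - q)) K} := by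
  rw [Metric.isOpen_iff]
  rintro p ⟨hp, hl⟩
  obtain ⟨ε, hε, h⟩ := hasLog_near hK hp
  refine ⟨ε, hε, fun q hq => ?_⟩
  obtain ⟨h1, h2, h3⟩ := h q hq
  refine ⟨h1, (hl.mul h2).congr fun z hz => ?_⟩
  have : z - p ≠ 0 := sub_ne_zero.mpr fun e => hp (e ▸ hz)
  field_simp

theorem isOpen_not_log {K : Set ℂ} (hK : IsClosed K) (u : ℂ → ℂ) :
    IsOpen {q | q ∉ K ∧ ¬ HasLog (fun z => u z * (z - q)) K} := by
  rw [Metric.isOpen_iff]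
  rintro p ⟨hp, hl⟩
  obtain ⟨ε, hε, h⟩ := hasLog_near hK hp
  refine ⟨ε, hε, fun q hq => ?_⟩
  obtain ⟨h1, h2, h3⟩ := h q hq
  refine ⟨h1, fun h4 => hl ((h4.mul h3).congr fun z hz => ?_)⟩
  have : z - q ≠ 0 := sub_ne_zero.mpr fun e => h1 (e ▸ hz)
  field_simp

theorem hasLog_far {K : Set ℂ} {c q : ℂ} {R : ℝ} (hK : K ⊆ ball c R) (hq : R ≤ dist q c) :
    HasLog (fun z => z - q) K := by
  have hcq : c ≠ q ∨ K = ∅ := by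
    by_contra! h
    obtain ⟨h1, z, hz⟩ := h
    have := hK hz
    rw [h1, dist_self] at hq
    have := pos_of_mem_ball this
    linarith
  rcases hcq with hcq | hcq
  · have h1 : HasLog (fun z => (z - q) / (c - q)) K := by
      refine HasLog.of_near (by fun_prop) (by fun_prop) fun z hz => ?_
      have := mem_ball_iff_norm.mp (hK hz)
      rw [dist_comm, dist_eq_norm] at hq
      have e : z - q - (c - q) = z - c := by ring
      rw [e]; linarith
    have h2 := h1.mul (HasLog.const (sub_ne_zero.mpr hcq) K)
    refine h2.congr fun z hz => ?_
    have : c - q ≠ 0 := sub_ne_zero.mpr hcq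
    field_simp
  · subst hcq; exact ⟨0, continuousOn_empty _, by simp⟩

theorem real_linear_decomp (A : ℂ →L[ℝ] ℂ) (hA : Function.Injective A) :
    ∃ a b : ℂ, (∀ w, A w = a * w + b * (starRingEnd ℂ) w) ∧ ‖a‖ ≠ ‖b‖ := by
  refine ⟨(A 1 - Complex.I * A Complex.I) / 2, (A 1 + Complex.I * A Complex.I) / 2, ?_, ?_⟩
  · intro w
    have h1 : A w = w.re * A 1 + w.im * A Complex.I := by
      conv_lhs => rw [← Complex.re_add_im w]
      have : (w.re : ℂ) + w.im * Complex.I = w.re • (1 : ℂ) + w.im • Complex.I := by simp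
      rw [this, map_add, map_smul, map_smul]; simp
    have h2 : (starRingEnd ℂ) w = w.re - w.im * Complex.I := by
      apply Complex.ext <;> simp
    rw [h1, h2]
    conv_rhs => enter [1, 2]; rw [← Complex.re_add_im w]
    ring_nf
    rw [Complex.I_sq]; ring
  · intro hab
    have key : ∀ w, A w = (A 1 - Complex.I * A Complex.I) / 2 * w +
        (A 1 + Complex.I * A Complex.I) / 2 * (starRingEnd ℂ) w := by
      intro w
      have h1 : A w = w.re * A 1 + w.im * A Complex.I := by
        conv_lhs => rw [← Complex.re_add_im w]
        have : (w.re : ℂ) + w.im * Complex.I = w.re • (1 : ℂ) + w.im • Complex.I := by simp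
        rw [this, map_add, map_smul, map_smul]; simp
      have h2 : (starRingEnd ℂ) w = w.re - w.im * Complex.I := by
        apply Complex.ext <;> simp
      rw [h1, h2]
      conv_rhs => enter [1, 2]; rw [← Complex.re_add_im w]
      ring_nf
      rw [Complex.I_sq]; ring
    set a := (A 1 - Complex.I * A Complex.I) / 2
    set b := (A 1 + Complex.I * A Complex.I) / 2
    by_cases ha : a = 0
    · have hb : b = 0 := by rw [ha, norm_zero] at hab; exact norm_eq_zero.mp hab.symm
      have : A 1 = A 0 := by rw [key 1, ha, hb]; simp
      exact one_ne_zero (hA this)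
    · obtain ⟨w, hw⟩ := IsAlgClosed.exists_eq_mul_self (- (b * (starRingEnd ℂ) a))
      have hb : b ≠ 0 := by
        intro hb; rw [hb, norm_zero] at hab; exact ha (norm_eq_zero.mp hab)
      have hw0 : w ≠ 0 := by
        rintro rfl
        simp [ha, hb] at hw
      have hA0 : A w = 0 := by
        have e1 : w * A w = 0 := by
          rw [key w]
          have hwn : w * (starRingEnd ℂ) w = (‖w‖ ^ 2 : ℝ) := by
            rw [Complex.mul_conj, Complex.normSq_eq_norm_sq]
          have hwn2 : ‖w‖ ^ 2 = ‖a‖ ^ 2 := by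
            have := congrArg norm hw
            rw [norm_neg, norm_mul, norm_mul, RCLike.norm_conj, ← hab] at this
            nlinarith
          have han : a * (starRingEnd ℂ) a = (‖a‖ ^ 2 : ℝ) := by
            rw [Complex.mul_conj, Complex.normSq_eq_norm_sq]
          have : w * (a * w + b * (starRingEnd ℂ) w) =
            a * (w * w) + b * (w * (starRingEnd ℂ) w) := by ring
          rw [this, ← hw, hwn, hwn2, ← han]; ring
        exact (mul_eq_zero.mp e1).resolve_left hw0
      exact hw0 (hA (hA0.trans (map_zero A).symm))

theorem local_zero {F : ℂ → ℂ} {A : ℂ →L[ℝ] ℂ} {p : ℂ} (hF : Continuous F)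
    (hA : HasFDerivAt F A p) (h0 : F p = 0) (hinj : Function.Injective A) :
    ∃ ε : ℤ, ∃ r > 0, HasLog (fun z => F z * (z - p) ^ ε) (ball p r \ {p}) := by
  obtain ⟨a, b, hab, hne⟩ := real_linear_decomp A hinj
  have hlo := hA.isLittleO
  have est : ∀ c > 0, ∃ r > 0, ∀ z ∈ ball p r, ‖F z - A (z - p)‖ ≤ c * ‖z - p‖ := by
    intro c hc
    have := hlo.def hc
    obtain ⟨r, hr, h⟩ := Metric.eventually_nhds_iff_ball.mp this
    exact ⟨r, hr, fun z hz => by simpa [h0] using h z hz⟩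
  rcases lt_or_gt_of_ne hne with h | h
  · obtain ⟨r, hr, hest⟩ := est ((‖b‖ - ‖a‖) / 2) (by linarith)
    refine ⟨1, r, hr, ?_⟩
    have hb : b ≠ 0 := norm_pos_iff.mp ((norm_nonneg _).trans_lt h)
    have h1 : HasLog (fun z => F z / (b * (starRingEnd ℂ) (z - p))) (ball p r \ {p}) := by
      refine HasLog.of_near hF.continuousOn (by fun_prop) fun z hz => ?_
      have hz0 : 0 < ‖z - p‖ := norm_pos_iff.mpr (sub_ne_zero.mpr hz.2)
      have e : F z - b * (starRingEnd ℂ) (z - p) = (F z - A (z - p)) + a * (z - p) := by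
        rw [hab]; ring
      rw [e]
      refine (norm_add_le _ _).trans_lt ?_
      rw [norm_mul, norm_mul, RCLike.norm_conj]
      have := hest z hz.1
      nlinarith
    have h2 : HasLog (fun z => ((‖z - p‖ ^ 2 : ℝ) : ℂ)) (ball p r \ {p}) := by
      have hp : ∀ z ∈ ball p r \ {p}, ‖z - p‖ ^ 2 ≠ 0 := fun z hz =>
        pow_ne_zero _ (norm_ne_zero_iff.mpr (sub_ne_zero.mpr hz.2))
      refine ⟨fun z => ((Real.log (‖z - p‖ ^ 2) : ℝ) : ℂ),
        Complex.continuous_ofReal.comp_continuousOn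
          (ContinuousOn.log (by fun_prop) hp), fun z hz => ?_⟩
      rw [← Complex.ofReal_exp, Real.exp_log]
      exact lt_of_le_of_ne (by positivity) (hp z hz).symm
    refine ((h1.mul (HasLog.const hb _)).mul h2).congr fun z hz => ?_
    have hz0 : z - p ≠ 0 := sub_ne_zero.mpr hz.2
    have e : ((‖z - p‖ ^ 2 : ℝ) : ℂ) = (z - p) * (starRingEnd ℂ) (z - p) := by
      rw [Complex.mul_conj, Complex.normSq_eq_norm_sq]
    rw [e, zpow_one]
    have hc : (starRingEnd ℂ) (z - p) ≠ 0 := (map_ne_zero _).mpr hz0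
    generalize (starRingEnd ℂ) (z - p) = y at hc
    field_simp
  · obtain ⟨r, hr, hest⟩ := est ((‖a‖ - ‖b‖) / 2) (by linarith)
    refine ⟨-1, r, hr, ?_⟩
    have ha : a ≠ 0 := norm_pos_iff.mp ((norm_nonneg _).trans_lt h)
    have h1 : HasLog (fun z => F z / (a * (z - p))) (ball p r \ {p}) := by
      refine HasLog.of_near hF.continuousOn (by fun_prop) fun z hz => ?_
      have hz0 : 0 < ‖z - p‖ := norm_pos_iff.mpr (sub_ne_zero.mpr hz.2)
      have e : F z - a * (z - p) = (F z - A (z - p)) + b * (starRingEnd ℂ) (z - p) := by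
        rw [hab]; ring
      rw [e]
      refine (norm_add_le _ _).trans_lt ?_
      rw [norm_mul, norm_mul, RCLike.norm_conj]
      have := hest z hz.1
      nlinarith
    refine (h1.mul (HasLog.const ha _)).congr fun z hz => ?_
    have hz0 : z - p ≠ 0 := sub_ne_zero.mpr hz.2
    rw [zpow_neg_one]
    field_simp

theorem remove_zeros {Ω K : Set ℂ} (hΩ : IsOpen Ω)
    (hlog : ∀ g, ContinuousOn g Ω → (∀ z ∈ Ω, g z ≠ 0) → HasLog g Ω)
    (hKΩ : K ⊆ Ω) (hK : IsClosed K) (P : Finset ℂ) : ∀ F : ℂ → ℂ,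
    ContinuousOn F (Ω \ P) → (∀ z ∈ Ω \ (P : Set ℂ), F z ≠ 0) →
    (∀ p ∈ P, ∃ ε : ℤ, ∃ r > 0, HasLog (fun z => F z * (z - p) ^ ε) (ball p r \ {p})) →
    (∀ p ∈ P, p ∉ K) →
    ∃ ε : ℂ → ℤ, HasLog (fun z => F z * ∏ p ∈ P, (z - p) ^ (ε p)) K := by
  classical
  induction P using Finset.induction_on with
  | empty =>
    intro F hF h0 _ _
    refine ⟨0, ?_⟩
    have := hlog F (by simpa using hF) (by simpa using h0)
    simpa using this.mono hKΩ
  | insert p P hpP ih =>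
    intro F hF h0 hloc hPK
    obtain ⟨ε, r₀, hr₀, ⟨l, hl, he⟩⟩ := hloc p (Finset.mem_insert_self p P)
    obtain ⟨r₁, hr₁, hb⟩ : ∃ r₁ > 0, ball p r₁ ⊆ (K ∪ P)ᶜ := by
      apply Metric.isOpen_iff.mp (hK.union P.finite_toSet.isClosed).isOpen_compl
      simp [hPK p (Finset.mem_insert_self p P), hpP]
    set r := min r₀ r₁ with hr
    have hrpos : 0 < r := lt_min hr₀ hr₁
    have hl' : ContinuousOn l (ball p r \ {p}) :=
      hl.mono (sdiff_subset_sdiff_left (ball_subset_ball (min_le_left _ _)))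
    have he' : ∀ z ∈ ball p r \ {p}, F z * (z - p) ^ ε = Complex.exp (l z) := fun z hz =>
      he z ⟨ball_subset_ball (min_le_left _ _) hz.1, hz.2⟩
    have hb' : ∀ z ∈ ball p r, z ∉ K ∧ z ∉ P := fun z hz => by
      have := hb (ball_subset_ball (min_le_right _ _) hz)
      simpa using this
    set χ : ℂ → ℝ := fun z => max 0 (min 1 (3 * dist z p / r - 1)) with hχ
    have hχc : Continuous χ := by fun_prop
    have hχ0 : ∀ z, dist z p ≤ r / 3 → χ z = 0 := fun z hz => by
      have : 3 * dist z p / r - 1 ≤ 0 := by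
        rw [sub_nonpos, div_le_one hrpos]; linarith
      simp only [hχ]
      exact max_eq_left ((min_le_right _ _).trans this)
    have hχ1 : ∀ z, 2 * r / 3 ≤ dist z p → χ z = 1 := fun z hz => by
      have : 1 ≤ 3 * dist z p / r - 1 := by
        rw [le_sub_iff_add_le, le_div_iff₀ hrpos]; linarith
      simp only [hχ]
      rw [min_eq_left this]; simp
    set F1 : ℂ → ℂ := fun z => if dist z p < r then Complex.exp (χ z * l z) else F z * (z - p) ^ ε
      with hF1
    have hF1out : ∀ z, 2 * r / 3 ≤ dist z p → F1 z = F z * (z - p) ^ ε := fun z hz => by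
      by_cases h : dist z p < r
      · have hzp : z ≠ p := by rintro rfl; simp at hz; linarith
        simp only [hF1, if_pos h, hχ1 z hz]
        rw [he' z ⟨h, hzp⟩]; simp
      · simp only [hF1, if_neg h]
    have hF1in : ∀ z, dist z p < r / 3 → F1 z = 1 := fun z hz => by
      have : dist z p < r := by linarith
      simp only [hF1, if_pos this, hχ0 z hz.le]; simp
    have hcont : ContinuousOn F1 (Ω \ P) := by
      intro z hz
      rcases lt_or_ge (dist z p) (r / 3) with h1 | h1
      · have : F1 =ᶠ[𝓝 z] fun _ => 1 := by
          filter_upwards [isOpen_ball.mem_nhds (show z ∈ ball p (r / 3) from h1)] with w hw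
          exact hF1in w hw
        exact (continuousAt_const.congr this.symm).continuousWithinAt
      · have hzp : z ≠ p := by rintro rfl; simp at h1; linarith
        rcases lt_or_ge (dist z p) r with h2 | h2
        · have hop : IsOpen (ball p r \ {p}) := isOpen_ball.sdiff isClosed_singleton
          have hmem := hop.mem_nhds (show z ∈ ball p r \ {p} from ⟨h2, hzp⟩)
          have : F1 =ᶠ[𝓝 z] fun w => Complex.exp (χ w * l w) := by
            filter_upwards [hmem] with w hw
            simp only [hF1, if_pos (show dist w p < r from hw.1)]
          have hc : ContinuousAt (fun w => Complex.exp (χ w * l w)) z := by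
            have h3 := hl'.continuousAt hmem
            have h4 := hχc.continuousAt (x := z)
            fun_prop
          exact (hc.congr this.symm).continuousWithinAt
        · have : F1 =ᶠ[𝓝 z] fun w => F w * (w - p) ^ ε := by
            have hop2 : IsOpen {w : ℂ | 2 * r / 3 < dist w p} :=
              isOpen_lt continuous_const (continuous_id.dist continuous_const)
            filter_upwards [hop2.mem_nhds (show z ∈ {w : ℂ | 2 * r / 3 < dist w p} from by
              simp only [mem_setOf_eq]; linarith)] with w hw
            exact hF1out w (le_of_lt hw)
          have hz' : z ∈ Ω \ ((insert p P : Finset ℂ) : Set ℂ) := by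
            refine ⟨hz.1, ?_⟩
            have := hz.2
            simp at this ⊢
            exact ⟨hzp, this⟩
          have hop : IsOpen (Ω \ ((insert p P : Finset ℂ) : Set ℂ)) :=
            hΩ.sdiff (Finset.finite_toSet _).isClosed
          have h3 := hF.continuousAt (hop.mem_nhds hz')
          have h4 : ContinuousAt (fun w => (w - p) ^ ε) z :=
            ContinuousAt.zpow₀ (by fun_prop) _ (Or.inl (sub_ne_zero.mpr hzp))
          exact ((h3.mul h4).congr this.symm).continuousWithinAt
    have hne : ∀ z ∈ Ω \ (P : Set ℂ), F1 z ≠ 0 := by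
      intro z hz
      by_cases h : dist z p < r
      · simp only [hF1, if_pos h]; exact Complex.exp_ne_zero _
      · have hzp : z ≠ p := by rintro rfl; simp at h; linarith
        simp only [hF1, if_neg h]
        refine mul_ne_zero (h0 z ⟨hz.1, ?_⟩) (zpow_ne_zero _ (sub_ne_zero.mpr hzp))
        have := hz.2
        simp at this ⊢
        exact ⟨hzp, this⟩
    have hloc1 : ∀ q ∈ P, ∃ ε : ℤ, ∃ r > 0,
        HasLog (fun z => F1 z * (z - q) ^ ε) (ball q r \ {q}) := by
      intro q hq
      obtain ⟨εq, s₀, hs₀, hlq⟩ := hloc q (Finset.mem_insert_of_mem hq)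
      have hqr : r ≤ dist q p := by
        by_contra! h
        exact (hb' q h).2 hq
      set s := min s₀ (r / 3)
      have hs1 : s ≤ r / 3 := min_le_right _ _
      refine ⟨εq, s, lt_min hs₀ (by linarith), ?_⟩
      have h1 := hlq.mono (sdiff_subset_sdiff_left (t := {q}) (ball_subset_ball (x := q) (min_le_left s₀ (r / 3))))
      have h2 : HasLog (fun z => z - p) (ball q s) :=
        hasLog_far (subset_refl _) (by rw [dist_comm]; linarith)
      have h3 := (h2.zpow ε).mono (sdiff_subset (s := ball q s) (t := {q}))
      refine (h1.mul h3).congr fun z hz => ?_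
      have h4 : 2 * r / 3 ≤ dist z p := by
        have h5 : dist z q < s := hz.1
        have := dist_triangle q z p
        rw [dist_comm q z] at this
        linarith
      simp only [hF1out z h4]; ring
    obtain ⟨δ, hδ⟩ := ih F1 hcont hne hloc1 (fun q hq => hPK q (Finset.mem_insert_of_mem hq))
    refine ⟨Function.update δ p ε, hδ.congr fun z hz => ?_⟩
    have hzr : r ≤ dist z p := by
      by_contra! h
      exact (hb' z h).1 hz
    rw [hF1out z (by linarith), Finset.prod_insert hpP, Function.update_self]
    have : ∏ x ∈ P, (z - x) ^ (Function.update δ p ε x) = ∏ x ∈ P, (z - x) ^ (δ x) := by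
      refine Finset.prod_congr rfl fun x hx => ?_
      rw [Function.update_of_ne]
      rintro rfl; exact hpP hx
    rw [this]; ring

/-- Every nonvanishing continuous function on a planar compactum is, up to exponentials,
a product of integer powers of linear functions. -/
theorem structure_thm {K : Set ℂ} (hK : IsCompact K) {u : ℂ → ℂ} (hu : ContinuousOn u K)
    (h0 : ∀ z ∈ K, u z ≠ 0) :
    ∃ (P : Finset ℂ) (ε : ℂ → ℤ), (∀ p ∈ P, p ∉ K) ∧
      HasLog (fun z => u z * ∏ p ∈ P, (z - p) ^ (ε p)) K := by
  classical
  obtain ⟨U, hU, hUu⟩ := extend_continuousOn hK.isClosed hu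
  obtain ⟨m, hm, hmu⟩ : ∃ m > 0, ∀ z ∈ K, m ≤ ‖u z‖ := by
    rcases K.eq_empty_or_nonempty with rfl | hne
    · exact ⟨1, one_pos, by simp⟩
    · obtain ⟨z, hz, hmin⟩ := hK.exists_isMinOn hne hu.norm
      exact ⟨‖u z‖, norm_pos_iff.mpr (h0 z hz), fun w hw => hmin hw⟩
  obtain ⟨g, hg, hgU, -⟩ := hU.exists_contDiff_approx (E := ℂ) (F := ℂ) 1
    (continuous_const (y := m / 3)) (fun _ => by positivity)
  have hgd : Differentiable ℝ g := hg.differentiable (by simp)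
  -- a small regular value
  obtain ⟨c, hc, hreg⟩ : ∃ c : ℂ, ‖c‖ < m / 3 ∧ ∀ z, g z = c → (fderiv ℝ g z).det ≠ 0 := by
    have hnull := MeasureTheory.addHaar_image_eq_zero_of_det_fderivWithin_eq_zero
      MeasureTheory.volume (f := g) (s := {z | (fderiv ℝ g z).det = 0})
      (f' := fun z => fderiv ℝ g z)
      (fun z _ => (hgd z).hasFDerivAt.hasFDerivWithinAt) (fun z hz => hz)
    by_contra! h
    have hsub : ball (0 : ℂ) (m / 3) ⊆ g '' {z | (fderiv ℝ g z).det = 0} := by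
      intro c hc
      obtain ⟨z, hz1, hz2⟩ := h c (by simpa using hc)
      exact ⟨z, hz2, hz1⟩
    have := MeasureTheory.measure_mono_null hsub hnull
    exact (Metric.measure_ball_pos MeasureTheory.volume (0 : ℂ) (show 0 < m / 3 by positivity)).ne' this
  set F : ℂ → ℂ := fun z => g z - c with hF
  have hFc : Continuous F := hg.continuous.sub continuous_const
  obtain ⟨R, hR0, hKR⟩ : ∃ R > 0, K ⊆ ball 0 R := by
    obtain ⟨R, hR⟩ := hK.isBounded.subset_ball 0
    exact ⟨max R 1, by positivity, hR.trans (ball_subset_ball (le_max_left _ _))⟩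
  have hlocal : ∀ z, F z = 0 →
      ∃ ε : ℤ, ∃ r > 0, HasLog (fun w => F w * (w - z) ^ ε) (ball z r \ {z}) := by
    intro z hz
    have hgz : g z = c := sub_eq_zero.mp hz
    have hinj : Function.Injective (fderiv ℝ g z) := by
      have := hreg z hgz
      have hu := LinearMap.isUnit_iff_isUnit_det (fderiv ℝ g z : ℂ →ₗ[ℝ] ℂ)
      have h3 := hu.mpr (isUnit_iff_ne_zero.mpr this)
      exact ((Module.End.isUnit_iff _).mp h3).injective
    exact local_zero hFc ((hgd z).hasFDerivAt.sub_const c) hz hinj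
  have hfin : (closedBall (0 : ℂ) R ∩ {z | F z = 0}).Finite := by
    have hcomp : IsCompact (closedBall (0 : ℂ) R ∩ {z | F z = 0}) :=
      (isCompact_closedBall _ _).inter_right (isClosed_eq hFc continuous_const)
    refine hcomp.finite ?_
    refine isDiscrete_iff_nhdsWithin.mpr fun z hz => ?_
    obtain ⟨ε, r, hr, hl⟩ := hlocal z hz.2
    refine le_antisymm ?_ (pure_le_nhdsWithin hz)
    rw [le_pure_iff]
    rw [mem_nhdsWithin]
    refine ⟨ball z r, isOpen_ball, mem_ball_self hr, fun w hw => ?_⟩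
    by_contra hwz
    exact hl.ne_zero (z := w) ⟨hw.1, hwz⟩ (by simp only [show F w = 0 from hw.2.2, zero_mul])
  have hclose : ∀ z ∈ K, ‖F z - u z‖ < ‖u z‖ := fun z hz => by
    have h1 := hgU z
    rw [hUu z hz, dist_eq_norm] at h1
    have h2 := hmu z hz
    have : F z - u z = (g z - u z) - c := by simp only [hF]; ring
    rw [this]
    have := norm_sub_le (g z - u z) c
    linarith
  obtain ⟨ε, hε⟩ := remove_zeros (Ω := ball 0 R) (K := K) isOpen_ball
    (fun g hg h0 => hasLog_convex (convex_ball _ _) isOpen_ball ⟨0, mem_ball_self hR0⟩ hg h0)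
    hKR hK.isClosed hfin.toFinset F hFc.continuousOn
    (fun z hz hz0 => hz.2 (by
      simp only [Finite.coe_toFinset]
      exact ⟨ball_subset_closedBall hz.1, hz0⟩))
    (fun z hz => hlocal z ((Finite.mem_toFinset _).mp hz).2)
    (fun z hz hzK => by
      have h1 := hclose z hzK
      have h2 : F z = 0 := ((Finite.mem_toFinset _).mp hz).2
      rw [h2] at h1; simp at h1)
  refine ⟨hfin.toFinset, ε, fun z hz hzK => by
      have h1 := hclose z hzK
      have h2 : F z = 0 := ((Finite.mem_toFinset _).mp hz).2
      rw [h2] at h1; simp at h1, ?_⟩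
  have h1 := (HasLog.of_near hFc.continuousOn hu hclose).inv
  refine (h1.mul hε).congr fun z hz => ?_
  have hF0 : F z ≠ 0 := by
    intro h2
    have h1 := hclose z hz
    rw [h2] at h1; simp at h1
  have hu0 := h0 z hz
  field_simp

def ULC (K : Set ℂ) : Prop :=
  ∀ ε > 0, ∃ δ > 0, ∀ x ∈ K, ∀ y ∈ K, dist x y < δ →
    ∃ C ⊆ K, IsPreconnected C ∧ x ∈ C ∧ y ∈ C ∧ ∀ z ∈ C, dist z x < ε

theorem property_b {K : Set ℂ} (hK : IsCompact K)
    (hlog : ∀ p, p ∉ K → HasLog (fun z => z - p) K) {u : ℂ → ℂ} (hu : ContinuousOn u K)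
    (h0 : ∀ z ∈ K, u z ≠ 0) : HasLog u K := by
  obtain ⟨P, ε, hP, hl⟩ := structure_thm hK hu h0
  have h1 : HasLog (fun z => ∏ p ∈ P, (z - p) ^ (ε p)) K :=
    HasLog.prod P (fun p hp => (hlog p (hP p hp)).zpow _)
  refine (hl.mul h1.inv).congr (fun z hz => ?_)
  have := h1.ne_zero hz
  field_simp

theorem no_log_annulus {K : Set ℂ} (hK : IsCompact K) {y0 : ℂ} (hy0 : y0 ∈ K) {δ : ℝ} (hδ : 0 < δ)
    {g : ℂ → ℂ} (hg : ContinuousOn g (thickening δ K \ K))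
    (he : ∀ z ∈ thickening δ K \ K, Complex.exp (g z) = z - y0) : False := by
  classical
  have hne : K.Nonempty := ⟨y0, hy0⟩
  set χ : ℂ → ℝ := fun z => max 0 (min 1 (2 - 3 * infDist z K / δ)) with hχ
  have hdc : Continuous fun z => infDist z K := continuous_infDist_pt K
  have hχc : Continuous χ := by fun_prop
  have hth : ∀ z, z ∈ thickening δ K ↔ infDist z K < δ := fun z => by
    rw [mem_thickening_iff_infDist_lt hne]
  have hχ1 : ∀ z, infDist z K < δ / 3 → χ z = 1 := fun z hz => by
    have : 3 * infDist z K / δ < 1 := by rw [div_lt_one hδ]; linarith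
    simp only [hχ]; rw [min_eq_left (by linarith)]; simp
  have hχ0 : ∀ z, 2 * δ / 3 < infDist z K → χ z = 0 := fun z hz => by
    have : 2 < 3 * infDist z K / δ := by rw [lt_div_iff₀ hδ]; linarith
    simp only [hχ]; rw [max_eq_left]; exact (min_le_right _ _).trans (by linarith)
  set w : ℂ → ℂ := fun z => if z ∈ K then 1 else if infDist z K < δ then
    (z - y0) * Complex.exp (-(χ z * g z)) else z - y0 with hw
  have hne0 : ∀ z, z ∉ K → z - y0 ≠ 0 := fun z hz h => hz (by rw [sub_eq_zero.mp h]; exact hy0)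
  have hw0 : ∀ z, w z ≠ 0 := fun z => by
    simp only [hw]; split_ifs with h1 h2
    · exact one_ne_zero
    · exact mul_ne_zero (hne0 z h1) (Complex.exp_ne_zero _)
    · exact hne0 z h1
  have hVo : IsOpen (thickening δ K \ K) := isOpen_thickening.sdiff hK.isClosed
  have hwc : Continuous w := by
    rw [continuous_iff_continuousAt]
    intro z
    by_cases hzK : z ∈ K
    · have h0 : infDist z K = 0 := infDist_zero_of_mem hzK
      have : w =ᶠ[𝓝 z] fun _ => 1 := by
        filter_upwards [(isOpen_lt hdc continuous_const).mem_nhds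
          (show infDist z K < δ / 3 by rw [h0]; positivity)] with x hx
        change infDist x K < δ / 3 at hx
        simp only [hw]; split_ifs with h1 h2
        · rfl
        · rw [hχ1 x hx, Complex.ofReal_one, one_mul, Complex.exp_neg, he x ⟨(hth x).2 h2, h1⟩,
            mul_inv_cancel₀ (hne0 x h1)]
        · linarith
      exact continuousAt_const.congr this.symm
    · by_cases hz : infDist z K < δ
      · have hm := hVo.mem_nhds (show z ∈ thickening δ K \ K from ⟨(hth z).2 hz, hzK⟩)
        have : w =ᶠ[𝓝 z] fun z => (z - y0) * Complex.exp (-(χ z * g z)) := by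
          filter_upwards [hm] with x hx
          simp only [hw, if_neg hx.2, if_pos ((hth x).1 hx.1)]
        have h3 := hg.continuousAt hm
        have h4 := hχc.continuousAt (x := z)
        refine ContinuousAt.congr ?_ this.symm
        fun_prop
      · have : w =ᶠ[𝓝 z] fun z => z - y0 := by
          filter_upwards [(isOpen_lt continuous_const hdc).mem_nhds
            (show 2 * δ / 3 < infDist z K by linarith)] with x hx
          change 2 * δ / 3 < infDist x K at hx
          simp only [hw]; split_ifs with h1 h2
          · rw [infDist_zero_of_mem h1] at hx; linarith
          · rw [hχ0 x hx]; simp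
          · rfl
        refine ContinuousAt.congr ?_ this.symm
        fun_prop
  obtain ⟨l, hl, hle⟩ := log_univ hwc hw0
  obtain ⟨M, hM⟩ := hK.isBounded.subset_closedBall y0
  have hM0 : 0 ≤ M := by have := hM hy0; simpa using this
  have := no_log_sphere (c := y0) (R := M + δ) (n := 1) (by linarith)
    ⟨l, hl.continuousOn, fun z hz => by
      rw [← hle]
      have h1 : dist z y0 = M + δ := hz
      have h2 : z ∉ K := fun h => by have := hM h; rw [mem_closedBall] at this; linarith
      have h3 : ¬ infDist z K < δ := fun h => by
        rw [infDist_lt_iff hne] at h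
        obtain ⟨y, hy, hzy⟩ := h
        have := hM hy; rw [mem_closedBall] at this
        have := dist_triangle z y y0
        linarith
      simp only [hw, if_neg h2, if_neg h3, zpow_one]⟩
  exact one_ne_zero this

theorem slit_of_near {a b : ℂ} (h : ‖a - b‖ < ‖b‖) : a / b ∈ Complex.slitPlane := by
  have hb : b ≠ 0 := by rintro rfl; simp at h; exact absurd h (not_lt.mpr (norm_nonneg _))
  have e : a / b = 1 + (a - b) / b := by field_simp; ring
  rw [e]
  apply Complex.mem_slitPlane_of_norm_lt_one
  rw [norm_div, div_lt_one (norm_pos_iff.mpr hb)]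
  exact h

theorem fpp_thm {K : Set ℂ} (hK : IsCompact K) (hconn : IsConnected K) (hulc : ULC K)
    (hlog : ∀ p, p ∉ K → HasLog (fun z => z - p) K) {f : ℂ → ℂ} (hf : ContinuousOn f K)
    (hmaps : MapsTo f K K) : ∃ x ∈ K, f x = x := by
  by_contra! hno
  obtain ⟨y0, hy0⟩ := hconn.nonempty
  have h0 : ∀ y ∈ K, y - f y ≠ 0 := fun y hy h => hno y hy (sub_eq_zero.mp h).symm
  have hhc : ContinuousOn (fun y => y - f y) K := continuousOn_id.sub hf
  obtain ⟨l, hl, hle⟩ := property_b hK hlog hhc h0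
  obtain ⟨ym, hym, hmin⟩ := hK.exists_isMinOn hconn.nonempty hhc.norm
  set η := ‖ym - f ym‖ with hη
  have hηpos : 0 < η := norm_pos_iff.mpr (h0 ym hym)
  have hηle : ∀ y ∈ K, η ≤ ‖y - f y‖ := fun y hy => hmin hy
  have : ∀ z, ∃ m : ℂ → ℂ, z ∉ K → (ContinuousOn m K ∧ m y0 = 0 ∧
      ∀ y ∈ K, Complex.exp (m y) = (z - y) / (z - y0)) := fun z => by
    by_cases hz : z ∈ K
    · exact ⟨fun _ => 0, fun h => absurd hz h⟩
    · obtain ⟨m, hm, hme⟩ := hlog z hz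
      refine ⟨fun y => m y - m y0, fun _ => ⟨hm.sub continuousOn_const, sub_self _, fun y hy => ?_⟩⟩
      rw [Complex.exp_sub, ← hme y hy, ← hme y0 hy0]
      change (y - z) / (y0 - z) = _
      rw [← neg_sub z y, ← neg_sub z y0, neg_div_neg_eq]
  choose lam hlam using this
  -- continuity of lam in the first variable
  have hlamc : ∀ z0, z0 ∉ K → ∀ y ∈ K, ContinuousAt (fun z => lam z y) z0 := by
    intro z0 hz0 y hy
    have hpos : 0 < infDist z0 K :=
      (hK.isClosed.notMem_iff_infDist_pos hconn.nonempty).mp hz0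
    have hnear : ∀ z, dist z z0 < infDist z0 K → ∀ y ∈ K, ‖(z - y) - (z0 - y)‖ < ‖z0 - y‖ := by
      intro z hz y hy
      have : infDist z0 K ≤ dist z0 y := infDist_le_dist_of_mem hy
      rw [sub_sub_sub_cancel_right, ← dist_eq_norm, ← dist_eq_norm]; linarith
    have hform : (fun z => lam z y) =ᶠ[𝓝 z0] fun z => lam z0 y + Complex.log ((z - y) / (z0 - y))
        - Complex.log ((z - y0) / (z0 - y0)) := by
      filter_upwards [ball_mem_nhds z0 hpos] with z hz
      have hzK : z ∉ K := fun h => by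
        have := infDist_le_dist_of_mem (x := z0) h; rw [mem_ball, dist_comm] at hz; linarith
      obtain ⟨a1, a2, a3⟩ := hlam z hzK
      obtain ⟨b1, b2, b3⟩ := hlam z0 hz0
      have hs := fun y hy => slit_of_near (hnear z hz y hy)
      have hz0y : ∀ y ∈ K, z0 - y ≠ 0 := fun y hy h => hz0 (by rw [sub_eq_zero.mp h]; exact hy)
      have hzy : ∀ y ∈ K, z - y ≠ 0 := fun y hy h => hzK (by rw [sub_eq_zero.mp h]; exact hy)
      have := log_unique hconn.isPreconnected (L := lam z)
        (M := fun y => lam z0 y + Complex.log ((z - y) / (z0 - y))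
        - Complex.log ((z - y0) / (z0 - y0))) a1
        ((b1.add (ContinuousOn.clog (ContinuousOn.div (by fun_prop) (by fun_prop) hz0y) hs)).sub
          continuousOn_const)
        (fun y hy => by
          have e1 := hz0y y hy
          have e2 := hz0y y0 hy0
          have e3 := hzy y0 hy0
          rw [a3 y hy, Complex.exp_sub, Complex.exp_add, b3 y hy,
            Complex.exp_log (div_ne_zero (hzy y hy) e1), Complex.exp_log (div_ne_zero e3 e2)]
          field_simp) hy hy0
      simp only [a2, b2] at this
      linear_combination this
    refine ContinuousAt.congr ?_ hform.symm
    have hc : ∀ y ∈ K, ContinuousAt (fun z => Complex.log ((z - y) / (z0 - y))) z0 := fun y hy => by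
      have hz0y : z0 - y ≠ 0 := fun h => hz0 (by rw [sub_eq_zero.mp h]; exact hy)
      refine ContinuousAt.clog (by fun_prop) ?_
      rw [div_self hz0y]; exact Complex.one_mem_slitPlane
    exact (continuousAt_const.add (hc y hy)).sub (hc y0 hy0)
  set G : ℂ → ℂ → ℂ := fun z y => Complex.log ((z - f y) / (y - f y)) + l y - lam z (f y) with hG
  have hslit : ∀ z, ∀ y ∈ K, dist z y < η → (z - f y) / (y - f y) ∈ Complex.slitPlane := by
    intro z y hy hzy
    apply slit_of_near
    rw [sub_sub_sub_cancel_right, ← dist_eq_norm]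
    exact hzy.trans_le (hηle y hy)
  have hGe : ∀ z, z ∉ K → ∀ y ∈ K, Complex.exp (G z y) = z - y0 := by
    intro z hz y hy
    have e1 : z - f y ≠ 0 := fun h => hz (by rw [sub_eq_zero.mp h]; exact hmaps hy)
    have e2 : z - y0 ≠ 0 := fun h => hz (by rw [sub_eq_zero.mp h]; exact hy0)
    have e3 := h0 y hy
    simp only [hG]
    rw [Complex.exp_sub, Complex.exp_add, (hlam z hz).2.2 _ (hmaps hy), ← hle y hy,
      Complex.exp_log (div_ne_zero e1 e3)]
    field_simp
  have hGz : ∀ z, z ∉ K → ∀ y ∈ K, dist z y < η → ContinuousAt (fun z => G z y) z := by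
    intro z hz y hy hzy
    refine ContinuousAt.sub (ContinuousAt.add (ContinuousAt.clog ?_ (hslit z y hy hzy))
      continuousAt_const) (hlamc z hz (f y) (hmaps hy))
    fun_prop
  have hGy : ∀ z, z ∉ K → ContinuousOn (fun y => G z y) (K ∩ ball z η) := by
    intro z hz
    have hf' := hf.mono (inter_subset_left (t := ball z η))
    refine ContinuousOn.sub (ContinuousOn.add (ContinuousOn.clog (ContinuousOn.div
      (continuousOn_const.sub hf') (continuousOn_id.sub hf') (fun y hy => h0 y hy.1))
      (fun y hy => hslit z y hy.1 (by rw [dist_comm]; exact hy.2))) (hl.mono inter_subset_left)) ?_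
    exact (hlam z hz).1.comp hf' (fun y hy => hmaps hy.1)
  obtain ⟨δ', hδ', hC⟩ := hulc (η / 2) (by positivity)
  set δ := min (δ' / 2) (η / 2) with hδ
  have hδpos : 0 < δ := by positivity
  have hd1 : δ ≤ δ' / 2 := min_le_left _ _
  have hd2 : δ ≤ η / 2 := min_le_right _ _
  have hindep : ∀ z, z ∉ K → ∀ y ∈ K, ∀ y' ∈ K, dist z y < δ → dist z y' < δ → G z y = G z y' := by
    intro z hz y hy y' hy' h1 h2
    obtain ⟨C, hCK, hCc, hyC, hyC', hCs⟩ := hC y hy y' hy' (by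
      have := dist_triangle_left y y' z; linarith)
    have hsub : C ⊆ K ∩ ball z η := fun x hx => ⟨hCK hx, by
      have := dist_triangle_right x z y
      have := hCs x hx
      rw [mem_ball]; linarith⟩
    have := log_unique hCc (L := fun y => G z y) (M := fun _ => Complex.log (z - y0))
      ((hGy z hz).mono hsub) continuousOn_const (fun x hx => by
        have e2 : z - y0 ≠ 0 := fun h => hz (by rw [sub_eq_zero.mp h]; exact hy0)
        rw [hGe z hz x (hCK hx), Complex.exp_log e2]) hyC hyC'
    simpa using this
  have : ∀ z, ∃ y, z ∈ thickening δ K \ K → y ∈ K ∧ dist z y < δ := fun z => by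
    by_cases hz : z ∈ thickening δ K \ K
    · obtain ⟨y, hy, h⟩ := mem_thickening_iff.mp hz.1
      exact ⟨y, fun _ => ⟨hy, h⟩⟩
    · exact ⟨0, fun h => absurd h hz⟩
  choose Y hY using this
  have hVo : IsOpen (thickening δ K \ K) := isOpen_thickening.sdiff hK.isClosed
  refine no_log_annulus hK hy0 hδpos (g := fun z => G z (Y z)) ?_ ?_
  · intro z hz
    obtain ⟨hy, hd⟩ := hY z hz
    have : (fun z => G z (Y z)) =ᶠ[𝓝 z] fun z' => G z' (Y z) := by
      filter_upwards [hVo.mem_nhds hz, isOpen_ball.mem_nhds (show z ∈ ball (Y z) δ from hd)]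
        with x hx hx2
      exact hindep x hx.2 _ (hY x hx).1 _ hy (hY x hx).2 hx2
    exact ((hGz z hz.2 _ hy (by linarith)).congr this.symm).continuousWithinAt
  · exact fun z hz => hGe z hz.2 _ (hY z hz).1

def Hull (K0 : Set ℂ) : Set ℂ := K0 ∪ {p | p ∉ K0 ∧ ¬ HasLog (fun z => z - p) K0}

theorem subset_hull (K0 : Set ℂ) : K0 ⊆ Hull K0 := subset_union_left

theorem hull_diff (K0 : Set ℂ) : Hull K0 \ K0 = {p | p ∉ K0 ∧ ¬ HasLog (fun z => z - p) K0} := by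
  ext p; constructor
  · rintro ⟨h | h, h2⟩
    · exact absurd h h2
    · exact h
  · exact fun h => ⟨Or.inr h, h.1⟩

theorem hull_compl (K0 : Set ℂ) : (Hull K0)ᶜ = {p | p ∉ K0 ∧ HasLog (fun z => z - p) K0} := by
  ext p; constructor
  · intro h
    have h1 : p ∉ K0 := fun hp => h (Or.inl hp)
    exact ⟨h1, by by_contra h2; exact h (Or.inr ⟨h1, h2⟩)⟩
  · rintro ⟨h1, h2⟩ (h | h)
    · exact h1 h
    · exact h.2 h2

theorem hull_diff_open {K0 : Set ℂ} (hK : IsClosed K0) : IsOpen (Hull K0 \ K0) := by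
  rw [hull_diff]
  simpa using isOpen_not_log hK (fun _ => 1)

theorem hull_closed {K0 : Set ℂ} (hK : IsClosed K0) : IsClosed (Hull K0) := by
  rw [← isOpen_compl_iff, hull_compl]
  simpa using isOpen_log hK (fun _ => 1)

theorem hull_subset_ball {K0 : Set ℂ} {c : ℂ} {R : ℝ} (h : K0 ⊆ ball c R) : Hull K0 ⊆ ball c R := by
  rintro p (hp | hp)
  · exact h hp
  · by_contra h2
    exact hp.2 (hasLog_far h (by rw [mem_ball] at h2; linarith))

theorem hull_compact {K0 : Set ℂ} (hK : IsCompact K0) : IsCompact (Hull K0) := by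
  obtain ⟨R, hR⟩ := hK.isBounded.subset_ball 0
  exact isCompact_of_isClosed_isBounded (hull_closed hK.isClosed)
    (isBounded_ball.subset (hull_subset_ball hR))

theorem hull_of_preconnected {K0 : Set ℂ} (hK : IsClosed K0) {S : Set ℂ} (hS : IsPreconnected S)
    (hd : ∀ x ∈ S, x ∉ K0) {p : ℂ} (hp : p ∈ S) (hpH : p ∈ Hull K0) : S ⊆ Hull K0 := by
  have h1 : S ⊆ (Hull K0 \ K0) := by
    refine hS.subset_left_of_subset_union (hull_diff_open hK)
      (hull_closed hK).isOpen_compl ?_ ?_ ⟨p, hp, hpH, hd p hp⟩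
    · exact disjoint_left.mpr fun x hx hx2 => hx2 hx.1
    · intro x hx
      by_cases h : x ∈ Hull K0
      · exact Or.inl ⟨h, hd x hx⟩
      · exact Or.inr h
  exact h1.trans sdiff_subset

theorem first_hit {K0 : Set ℂ} (hK : IsClosed K0) {p q : ℂ} (hp : p ∈ Hull K0)
    (hx : ∃ x ∈ segment ℝ p q, x ∈ K0) :
    ∃ a ∈ K0, ∃ C ⊆ Hull K0, IsPreconnected C ∧ p ∈ C ∧ a ∈ C ∧ C ⊆ segment ℝ p q := by
  have hc : Continuous (AffineMap.lineMap (k := ℝ) p q) := AffineMap.lineMap_continuous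
  set T := Icc (0 : ℝ) 1 ∩ (AffineMap.lineMap (k := ℝ) p q) ⁻¹' K0 with hT
  have hTc : IsCompact T := isCompact_Icc.inter_right (hK.preimage hc)
  have hTne : T.Nonempty := by
    obtain ⟨x, hx, hxK⟩ := hx
    rw [segment_eq_image_lineMap] at hx
    obtain ⟨t, ht, rfl⟩ := hx
    exact ⟨t, ht, hxK⟩
  obtain ⟨t0, ht0, hmin⟩ := hTc.exists_isLeast hTne
  refine ⟨_, ht0.2, AffineMap.lineMap (k := ℝ) p q '' Icc 0 t0, ?_,
    isPreconnected_Icc.image _ hc.continuousOn, ⟨0, ⟨le_rfl, ht0.1.1⟩, by simp⟩,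
    ⟨t0, ⟨ht0.1.1, le_rfl⟩, rfl⟩, ?_⟩
  · have h1 : t0 = 0 ∨ AffineMap.lineMap (k := ℝ) p q '' Ico 0 t0 ⊆ Hull K0 := by
      rcases ht0.1.1.eq_or_lt with h | h
      · exact Or.inl h.symm
      · right
        refine hull_of_preconnected hK (isPreconnected_Ico.image _ hc.continuousOn) ?_
          (p := p) ⟨0, ⟨le_rfl, h⟩, by simp⟩ hp
        rintro _ ⟨t, ht, rfl⟩ hk
        exact absurd (hmin ⟨⟨ht.1, ht.2.le.trans ht0.1.2⟩, hk⟩) (not_le.mpr ht.2)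
    rintro _ ⟨t, ht, rfl⟩
    rcases ht.2.eq_or_lt with h | h
    · rw [h]; exact subset_hull _ ht0.2
    · rcases h1 with h1 | h1
      · linarith [ht.1]
      · exact h1 ⟨t, ⟨ht.1, h⟩, rfl⟩
  · rw [segment_eq_image_lineMap]
    exact image_mono (Icc_subset_Icc_right ht0.1.2)

theorem hull_connected {K0 : Set ℂ} (hK : IsClosed K0) (hc : IsConnected K0) :
    IsConnected (Hull K0) := by
  obtain ⟨q, hq⟩ := hc.nonempty
  refine ⟨⟨q, subset_hull _ hq⟩, isPreconnected_of_forall q fun p hp => ?_⟩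
  obtain ⟨a, ha, C, hC, hCc, hpC, haC, -⟩ := first_hit hK hp ⟨q, right_mem_segment ℝ p q, hq⟩
  exact ⟨C ∪ K0, union_subset hC (subset_hull _), Or.inr hq, Or.inl hpC,
    hCc.union a haC ha hc.isPreconnected⟩

theorem segment_dist {p q x : ℂ} (h : x ∈ segment ℝ p q) : dist x p ≤ dist q p := by
  have h1 : q ∈ closedBall p (dist q p) := by simp
  have h2 : p ∈ closedBall p (dist q p) := by simp
  exact (convex_closedBall p (dist q p)).segment_subset h2 h1 h

theorem hull_ulc {K0 : Set ℂ} (hK : IsClosed K0) (hu : ULC K0) : ULC (Hull K0) := by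
  intro ε hε
  obtain ⟨δ, hδ, h⟩ := hu (ε / 2) (by positivity)
  refine ⟨min (δ / 2) (ε / 4), by positivity, fun k hk k' hk' hkk => ?_⟩
  have h1 : dist k k' < δ / 2 := hkk.trans_le (min_le_left _ _)
  have h2 : dist k k' < ε / 4 := hkk.trans_le (min_le_right _ _)
  have hs : ∀ z ∈ segment ℝ k k', dist z k ≤ dist k k' := fun z hz => by
    have := segment_dist hz; rwa [dist_comm k' k] at this
  by_cases hhit : ∃ x ∈ segment ℝ k k', x ∈ K0
  · obtain ⟨a, ha, C1, hC1, hC1c, hkC1, haC1, hs1⟩ := first_hit hK hk hhit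
    obtain ⟨b, hb, C2, hC2, hC2c, hkC2, hbC2, hs2⟩ := first_hit hK hk' (segment_symm ℝ k k' ▸ hhit)
    rw [segment_symm] at hs2
    have ha' := hs a (hs1 haC1)
    have hb' := hs b (hs2 hbC2)
    obtain ⟨C, hCK, hCc, haC, hbC, hCs⟩ := h a ha b hb (by
      have := dist_triangle_right a b k; linarith)
    refine ⟨C1 ∪ C ∪ C2, union_subset (union_subset hC1 (hCK.trans (subset_hull _))) hC2,
      (hC1c.union a haC1 haC hCc).union b (Or.inr hbC) hbC2 hC2c, Or.inl (Or.inl hkC1),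
      Or.inr hkC2, ?_⟩
    rintro z ((hz | hz) | hz)
    · have := hs z (hs1 hz); linarith
    · have := hCs z hz; have := dist_triangle z a k; linarith
    · have := hs z (hs2 hz); linarith
  · push Not at hhit
    have hpc := (convex_segment (𝕜 := ℝ) k k').isPreconnected
    exact ⟨segment ℝ k k', hull_of_preconnected hK hpc hhit (left_mem_segment ℝ k k') hk, hpc,
      left_mem_segment ℝ k k', right_mem_segment ℝ k k', fun z hz => by have := hs z hz; linarith⟩

theorem hull_log {K0 : Set ℂ} (hK : IsClosed K0) {q : ℂ} (hq : q ∉ Hull K0) :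
    HasLog (fun z => z - q) (Hull K0) := by
  classical
  have hq' : q ∈ (Hull K0)ᶜ := hq
  rw [hull_compl] at hq'
  obtain ⟨l, hl, hle⟩ := hq'.2.exists_continuous hK
  have hne : ∀ z ∈ Hull K0, z - q ≠ 0 := fun z hz h => hq (by rw [← sub_eq_zero.mp h]; exact hz)
  set w : ℂ → ℂ := fun z => if z ∈ Hull K0 then (z - q) * Complex.exp (-l z) else 1 with hw
  have hwc : Continuous w := by
    refine Continuous.if ?_ (by fun_prop) continuous_const
    intro z hz
    have hzK : z ∈ K0 := by
      by_contra h
      have hz1 : z ∈ Hull K0 := (hull_closed hK).frontier_subset hz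
      have : z ∈ interior (Hull K0) :=
        mem_interior.mpr ⟨_, sdiff_subset, hull_diff_open hK, hz1, h⟩
      exact hz.2 this
    have := hle z hzK
    rw [this, Complex.exp_neg, mul_inv_cancel₀ (Complex.exp_ne_zero _)]
  have hw0 : ∀ z, w z ≠ 0 := fun z => by
    simp only [hw]; split_ifs with h
    · exact mul_ne_zero (hne z h) (Complex.exp_ne_zero _)
    · exact one_ne_zero
  obtain ⟨m, hm, hme⟩ := log_univ hwc hw0
  refine ⟨fun z => m z + l z, (hm.add hl).continuousOn, fun z hz => ?_⟩
  have := hme z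
  simp only [hw, if_pos hz] at this
  rw [Complex.exp_add, ← this, Complex.exp_neg]
  field_simp [Complex.exp_ne_zero]

theorem ulc_of_locallyConnected {X : Set ℂ} (hX : IsCompact X) (hlc : LocallyConnectedSpace ↥X) :
    ULC X := by
  intro ε hε
  have : CompactSpace ↥X := isCompact_iff_compactSpace.mp hX
  have h1 : ∀ x : ↥X, ∃ V : Set ↥X, IsOpen V ∧ x ∈ V ∧ IsConnected V ∧ V ⊆ ball x (ε / 2) := by
    intro x
    obtain ⟨V, hV, hV2⟩ := (LocallyConnectedSpace.open_connected_basis x).mem_iff.mp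
      (ball_mem_nhds x (show 0 < ε / 2 by positivity))
    exact ⟨V, hV.1, hV.2.1, hV.2.2, hV2⟩
  choose V hVo hxV hVc hVs using h1
  obtain ⟨δ, hδ, hL⟩ := lebesgue_number_lemma_of_metric (isCompact_univ (X := ↥X)) hVo
    (fun x _ => mem_iUnion.mpr ⟨x, hxV x⟩)
  refine ⟨δ, hδ, fun x hx y hy hxy => ?_⟩
  obtain ⟨i, hi⟩ := hL ⟨x, hx⟩ trivial
  have hxi : (⟨x, hx⟩ : ↥X) ∈ V i := hi (mem_ball_self hδ)
  refine ⟨(↑) '' V i, ?_, (hVc i).isPreconnected.image _ continuous_subtype_val.continuousOn,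
    ⟨⟨x, hx⟩, hxi, rfl⟩, ⟨⟨y, hy⟩, hi ?_, rfl⟩, ?_⟩
  · rintro _ ⟨z, -, rfl⟩; exact z.2
  · rw [mem_ball, dist_comm]; exact hxy
  · rintro _ ⟨z, hz, rfl⟩
    have h1 : dist z i < ε / 2 := hVs i hz
    have h2 : dist (⟨x, hx⟩ : ↥X) i < ε / 2 := hVs i hxi
    have h3 := dist_triangle_right z ⟨x, hx⟩ i
    change dist z ⟨x, hx⟩ < ε
    linarith

def JJ (X : Set ℂ) (r : ℝ) (y z : ℂ) : Prop :=
  ∃ C ⊆ X, IsPreconnected C ∧ y ∈ C ∧ z ∈ C ∧ ∀ w ∈ C, dist w y < r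

def TT (X : Set ℂ) (r : ℕ → ℝ) (n : ℕ) : ℕ → ℂ → Set ℂ
  | 0, q => {q}
  | m + 1, q => {z | ∃ y ∈ TT X r n m q, JJ X (r (n + m)) y z}

theorem JJ.refl {X : Set ℂ} {r : ℝ} (hr : 0 < r) {y : ℂ} (hy : y ∈ X) : JJ X r y y :=
  ⟨{y}, by simpa using hy, isPreconnected_singleton, rfl, rfl, fun w hw => by
    rw [mem_singleton_iff.mp hw, dist_self]; exact hr⟩

theorem JJ.mem {X : Set ℂ} {r : ℝ} {y z : ℂ} (h : JJ X r y z) : z ∈ X := by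
  obtain ⟨C, hC, -, -, h, -⟩ := h; exact hC h

theorem JJ.dist_lt {X : Set ℂ} {r : ℝ} {y z : ℂ} (h : JJ X r y z) : dist z y < r := by
  obtain ⟨C, hC, -, -, h, h2⟩ := h; exact h2 z h

section
variable {X : Set ℂ} {r : ℕ → ℝ}

theorem TT_sub {n m : ℕ} {q : ℂ} (hq : q ∈ X) : TT X r n m q ⊆ X := by
  cases m with
  | zero => simpa [TT] using hq
  | succ m => rintro z ⟨y, -, h⟩; exact h.mem

theorem TT_succ (hr : ∀ n, 0 < r n) {n m : ℕ} {q : ℂ} (hq : q ∈ X) : TT X r n m q ⊆ TT X r n (m + 1) q :=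
  fun y hy => ⟨y, hy, JJ.refl (hr _) (TT_sub hq hy)⟩

theorem TT_mono (hr : ∀ n, 0 < r n) {n m k : ℕ} (h : m ≤ k) {q : ℂ} (hq : q ∈ X) : TT X r n m q ⊆ TT X r n k q := by
  induction h with
  | refl => exact subset_rfl
  | step _ ih => exact ih.trans (TT_succ hr hq)

theorem TT_self (hr : ∀ n, 0 < r n) {n m : ℕ} {q : ℂ} (hq : q ∈ X) : q ∈ TT X r n m q :=
  TT_mono hr (Nat.zero_le m) hq (show q ∈ TT X r n 0 q from rfl)

theorem TT_preconnected (hr : ∀ n, 0 < r n) {n m : ℕ} {q : ℂ} (hq : q ∈ X) : IsPreconnected (TT X r n m q) := by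
  induction m with
  | zero => exact isPreconnected_singleton
  | succ m ih =>
    refine isPreconnected_of_forall q fun z hz => ?_
    obtain ⟨y, hy, C, hCX, hC, hyC, hzC, hCs⟩ := hz
    refine ⟨TT X r n m q ∪ C, union_subset (TT_succ hr hq) ?_, Or.inl (TT_self hr hq), Or.inr hzC,
      ih.union y hy hyC hC⟩
    exact fun w hw => ⟨y, hy, C, hCX, hC, hyC, hw, hCs⟩

theorem TT_dist (hr2 : ∀ n, 2 * r (n + 1) = r n) {n m : ℕ} {q z : ℂ} (hz : z ∈ TT X r n m q) :
    dist z q ≤ 2 * r n - 2 * r (n + m) := by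
  induction m generalizing z with
  | zero => rw [mem_singleton_iff.mp hz]; simp
  | succ m ih =>
    obtain ⟨y, hy, hJ⟩ := hz
    have h1 := ih hy
    have h2 := hJ.dist_lt
    have h3 := dist_triangle z y q
    have h4 := hr2 (n + m)
    rw [← add_assoc]
    linarith

theorem TT_add {n m : ℕ} {x0 z : ℂ} :
    z ∈ TT X r 0 (n + m) x0 ↔ ∃ q ∈ TT X r 0 n x0, z ∈ TT X r n m q := by
  induction m generalizing z with
  | zero => simp [TT]
  | succ m ih =>
    rw [← add_assoc]
    constructor
    · rintro ⟨y, hy, hJ⟩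
      obtain ⟨q, hq, hy2⟩ := ih.mp hy
      rw [Nat.zero_add] at hJ
      exact ⟨q, hq, y, hy2, hJ⟩
    · rintro ⟨q, hq, y, hy, hJ⟩
      exact ⟨y, ih.mpr ⟨q, hq, hy⟩, by rwa [Nat.zero_add]⟩

end

theorem small_nbhd {X : Set ℂ} (hX : IsCompact X) (hu : ULC X) {x0 : ℂ} (hx0 : x0 ∈ X) {ε : ℝ}
    (hε : 0 < ε) : ∃ W ⊆ X, x0 ∈ W ∧ (∀ y ∈ W, ∃ δ > 0, ∀ z ∈ X, dist y z < δ → z ∈ W) ∧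
      IsPreconnected W ∧ W ⊆ ball x0 ε ∧ ULC (closure W) := by
  set r : ℕ → ℝ := fun n => (ε / 2) * (1 / 2) ^ n with hrdef
  have hr : ∀ n, 0 < r n := fun n => by positivity
  have hr2 : ∀ n, 2 * r (n + 1) = r n := fun n => by simp only [hrdef, pow_succ]; ring
  have hJ : ∀ n, ∃ δ > 0, ∀ x ∈ X, ∀ y ∈ X, dist x y < δ → JJ X (r n) x y := fun n => hu _ (hr n)
  set W : Set ℂ := ⋃ m, TT X r 0 m x0 with hW
  have hWX : W ⊆ X := iUnion_subset fun m => TT_sub hx0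
  refine ⟨W, hWX, mem_iUnion.mpr ⟨0, rfl⟩, ?_, ?_, ?_, ?_⟩
  · intro y hy
    obtain ⟨m, hm⟩ := mem_iUnion.mp hy
    obtain ⟨δ, hδ, h⟩ := hJ m
    refine ⟨δ, hδ, fun z hz hyz => mem_iUnion.mpr ⟨m + 1, y, hm, ?_⟩⟩
    rw [Nat.zero_add]
    exact h y (hWX hy) z hz hyz
  · exact isPreconnected_iUnion ⟨x0, mem_iInter.mpr fun m => TT_self hr hx0⟩
      fun m => TT_preconnected hr hx0
  · refine iUnion_subset fun m z hz => ?_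
    have h1 := TT_dist hr2 hz
    have h2 := hr (0 + m)
    have h3 : r 0 = ε / 2 := by simp [hrdef]
    rw [mem_ball]; linarith
  · intro η hη
    obtain ⟨n, hn⟩ : ∃ n, 13 * r n < η := by
      have : Tendsto (fun n => 13 * r n) atTop (𝓝 (13 * ((ε / 2) * 0))) :=
        ((tendsto_pow_atTop_nhds_zero_of_lt_one (by norm_num) (by norm_num)).const_mul _).const_mul _
      simp only [mul_zero] at this
      exact (this.eventually (gt_mem_nhds hη)).exists
    obtain ⟨d, hd, hJn⟩ := hJ n
    have hTX : TT X r 0 n x0 ⊆ X := TT_sub hx0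
    obtain ⟨Q, hQT, hQ, hcov⟩ := finite_approx_of_totallyBounded (hX.totallyBounded.subset hTX) d hd
    set A : ℂ → Set ℂ := fun p => {z | JJ X (r n) p z} ∪
      {z | ∃ q ∈ TT X r 0 n x0, JJ X (r n) p q ∧ ∃ m, z ∈ TT X r n m q} with hA
    have hpA : ∀ p ∈ Q, p ∈ A p := fun p hp => Or.inl (JJ.refl (hr n) (hTX (hQT hp)))
    have hAW : ∀ p ∈ Q, A p ⊆ W := by
      rintro p hp z (hz | ⟨q, hq, -, m, hm⟩)
      · exact mem_iUnion.mpr ⟨n + 1, p, hQT hp, by rwa [Nat.zero_add]⟩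
      · exact mem_iUnion.mpr ⟨n + m, TT_add.mpr ⟨q, hq, hm⟩⟩
    have hWA : W = ⋃ p ∈ Q, A p := by
      apply Subset.antisymm _ (iUnion₂_subset hAW)
      refine iUnion_subset fun m z hz => ?_
      have hz2 := TT_mono hr (Nat.le_add_left m n) hx0 hz
      obtain ⟨q, hq, hzq⟩ := TT_add.mp hz2
      obtain ⟨p, hp, hpq⟩ := mem_iUnion₂.mp (hcov hq)
      exact mem_iUnion₂.mpr ⟨p, hp, Or.inr ⟨q, hq, hJn p (hTX (hQT hp)) q (hTX hq)
        (by rw [dist_comm]; exact hpq), m, hzq⟩⟩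
    have hAc : ∀ p ∈ Q, IsPreconnected (A p) := by
      intro p hp
      have hstar : ∀ z, JJ X (r n) p z → ∃ C ⊆ A p, p ∈ C ∧ z ∈ C ∧ IsPreconnected C := by
        rintro z ⟨C, hCX, hC, hpC, hzC, hCs⟩
        exact ⟨C, fun w hw => Or.inl ⟨C, hCX, hC, hpC, hw, hCs⟩, hpC, hzC, hC⟩
      refine isPreconnected_of_forall p ?_
      rintro z (hz | ⟨q, hq, hpq, m, hm⟩)
      · exact hstar z hz
      · obtain ⟨C, hCA, hpC, hqC, hC⟩ := hstar q hpq
        refine ⟨C ∪ TT X r n m q, union_subset hCA ?_, Or.inl hpC, Or.inr hm,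
          hC.union q hqC (TT_self hr (hTX hq)) (TT_preconnected hr (hTX hq))⟩
        exact fun w hw => Or.inr ⟨q, hq, hpq, m, hw⟩
    have hAd : ∀ p ∈ Q, closure (A p) ⊆ closedBall p (3 * r n) := by
      intro p hp
      apply closure_minimal _ isClosed_closedBall
      rintro z (hz | ⟨q, hq, hpq, m, hm⟩)
      · have := JJ.dist_lt hz; have := hr n; rw [mem_closedBall]; linarith
      · have h1 := hpq.dist_lt; have h2 := TT_dist hr2 hm; have h3 := hr (n + m)
        have h4 := dist_triangle z q p
        rw [mem_closedBall]; linarith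
    have hcl : closure W = ⋃ p ∈ Q, closure (A p) := by rw [hWA, hQ.closure_biUnion]
    have hcomp : ∀ p ∈ Q, IsCompact (closure (A p)) := fun p hp =>
      isCompact_of_isClosed_isBounded isClosed_closure (isBounded_closedBall.subset (hAd p hp))
    have hpair : ∀ᶠ t : ℝ in 𝓝[>] 0, ∀ p ∈ Q, ∀ q ∈ Q, ∀ x ∈ closure (A p), ∀ y ∈ closure (A q),
        dist x y < t → (closure (A p) ∩ closure (A q)).Nonempty := by
      refine (eventually_all_finite hQ).mpr fun p hp => (eventually_all_finite hQ).mpr fun q hq => ?_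
      by_cases hne : (closure (A p) ∩ closure (A q)).Nonempty
      · exact Eventually.of_forall fun t x _ y _ _ => hne
      · rw [not_nonempty_iff_eq_empty, ← disjoint_iff_inter_eq_empty] at hne
        obtain ⟨s, hs, hsd⟩ := exists_pos_forall_lt_edist (hcomp p hp) isClosed_closure hne
        have hs0 : (0 : ℝ) < s := hs
        filter_upwards [Ioo_mem_nhdsGT hs0] with t ht x hx y hy hxy
        have h1 := hsd x hx y hy
        rw [edist_nndist, ENNReal.coe_lt_coe, ← NNReal.coe_lt_coe, coe_nndist] at h1
        linarith [ht.2]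
    obtain ⟨δ, hδp, hδ⟩ := (hpair.and self_mem_nhdsWithin).exists
    refine ⟨δ, hδ, fun x hx y hy hxy => ?_⟩
    rw [hcl] at hx hy
    obtain ⟨p, hp, hxp⟩ := mem_iUnion₂.mp hx
    obtain ⟨q, hq, hyq⟩ := mem_iUnion₂.mp hy
    obtain ⟨w, hwp, hwq⟩ := hδp p hp q hq x hxp y hyq hxy
    refine ⟨closure (A p) ∪ closure (A q), union_subset (closure_mono (hAW p hp))
      (closure_mono (hAW q hq)), (hAc p hp).closure.union w hwp hwq (hAc q hq).closure,
      Or.inl hxp, Or.inr hyq, ?_⟩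
    have b1 : dist x p ≤ 3 * r n := hAd p hp hxp
    have b2 : dist w p ≤ 3 * r n := hAd p hp hwp
    have b3 : dist w q ≤ 3 * r n := hAd q hq hwq
    have b0 := hr n
    rintro z (hz | hz)
    · have b4 : dist z p ≤ 3 * r n := hAd p hp hz
      have := dist_triangle_right z x p
      linarith
    · have b4 : dist z q ≤ 3 * r n := hAd q hq hz
      have := dist_triangle_right z w q
      have := dist_triangle_right w x p
      have := dist_triangle z w x
      linarith

noncomputable def segPath (x y : ℂ) : Path x y where
  toFun t := AffineMap.lineMap (k := ℝ) x y (t : ℝ)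
  continuous_toFun := AffineMap.lineMap_continuous.comp continuous_subtype_val
  source' := by simp
  target' := by simp

theorem segPath_mem (x y : ℂ) (t : unitInterval) : segPath x y t ∈ segment ℝ x y := by
  rw [segment_eq_image_lineMap]
  exact ⟨t, t.2, rfl⟩

inductive GoodPath (S : Set ℂ) (s : ℝ) : ∀ {x y : ℂ}, Path x y → Prop
  | seg {x y : ℂ} (h : JJ S s x y) : GoodPath S s (segPath x y)
  | trans {x y z : ℂ} {γ : Path x y} {γ' : Path y z} (h : GoodPath S s γ) (h' : GoodPath S s γ') :
      GoodPath S s (γ.trans γ')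

theorem JJ.mem_left {X : Set ℂ} {r : ℝ} {y z : ℂ} (h : JJ X r y z) : y ∈ X := by
  obtain ⟨C, hC, -, h, -⟩ := h; exact hC h

theorem GoodPath.near {S : Set ℂ} {s : ℝ} {x y : ℂ} {γ : Path x y} (h : GoodPath S s γ) :
    ∀ t, ∃ u ∈ S, dist (γ t) u < s := by
  induction h with
  | seg h =>
    rename_i x y
    intro t
    refine ⟨x, h.mem_left, ?_⟩
    have h1 := segment_dist (segPath_mem x y t)
    exact h1.trans_lt h.dist_lt
  | trans h h' ih ih' =>
    intro t
    rw [Path.trans_apply]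
    split_ifs with ht
    · exact ih _
    · exact ih' _

theorem GoodPath.chain {S : Set ℂ} (hu : ULC S) {s : ℝ} (hs : 0 < s) {B : Set ℂ} (hB : Convex ℝ B)
    {C : Set ℂ} (hC : IsPreconnected C) (hCS : C ⊆ S) (hCB : C ⊆ B) {x y : ℂ} (hx : x ∈ C)
    (hy : y ∈ C) : ∃ γ : Path x y, GoodPath S s γ ∧ ∀ t, γ t ∈ B := by
  obtain ⟨δ, hδ, h⟩ := hu s hs
  refine hC.induction₂' (P := fun x y => ∃ γ : Path x y, GoodPath S s γ ∧ ∀ t, γ t ∈ B) ?_ ?_ hx hy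
  · intro u hu
    filter_upwards [inter_mem_nhdsWithin C (ball_mem_nhds u hδ)] with v hv
    have hvu : dist v u < δ := hv.2
    refine ⟨⟨segPath u v, .seg (h u (hCS hu) v (hCS hv.1) (by rwa [dist_comm])), fun t => ?_⟩,
      ⟨segPath v u, .seg (h v (hCS hv.1) u (hCS hu) hvu), fun t => ?_⟩⟩
    · exact hB.segment_subset (hCB hu) (hCB hv.1) (segPath_mem _ _ t)
    · exact hB.segment_subset (hCB hv.1) (hCB hu) (segPath_mem _ _ t)
  · rintro u v w - - - ⟨γ, h1, h2⟩ ⟨γ', h1', h2'⟩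
    refine ⟨γ.trans γ', h1.trans h1', fun t => ?_⟩
    rw [Path.trans_apply]
    split_ifs
    · exact h2 _
    · exact h2' _

theorem GoodPath.refine {S : Set ℂ} (hu : ULC S) {s s' : ℝ} (hs' : 0 < s') {x y : ℂ} {γ : Path x y}
    (h : GoodPath S s γ) : ∃ γ' : Path x y, GoodPath S s' γ' ∧ ∀ t, dist (γ t) (γ' t) ≤ 2 * s := by
  induction h with
  | seg h =>
    rename_i x y
    have h0 := h
    obtain ⟨C, hCS, hC, hxC, hyC, hCs⟩ := h
    obtain ⟨γ, h1, h2⟩ := GoodPath.chain hu hs' (convex_ball x s) hC hCS hCs hxC hyC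
    refine ⟨γ, h1, fun t => ?_⟩
    have h3 := segment_dist (segPath_mem x y t)
    have h4 : dist (γ t) x < s := h2 t
    have h5 := h0.dist_lt
    have := dist_triangle_right (segPath x y t) (γ t) x
    linarith
  | trans h h' ih ih' =>
    obtain ⟨γ, h1, h2⟩ := ih
    obtain ⟨γ', h1', h2'⟩ := ih'
    refine ⟨γ.trans γ', h1.trans h1', fun t => ?_⟩
    rw [Path.trans_apply, Path.trans_apply]
    split_ifs
    · exact h2 _
    · exact h2' _

theorem path_of_ulc {S : Set ℂ} (hS : IsClosed S) (hu : ULC S) {C : Set ℂ} (hC : IsPreconnected C)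
    (hCS : C ⊆ S) {x y : ℂ} (hx : x ∈ C) (hy : y ∈ C) : ∃ γ : Path x y, ∀ t, γ t ∈ S := by
  set s : ℕ → ℝ := fun n => (1 / 2) ^ n with hs
  have hspos : ∀ n, 0 < s n := fun n => by positivity
  obtain ⟨γ0, h0, -⟩ := GoodPath.chain hu (hspos 0) convex_univ hC hCS (subset_univ _) hx hy
  have step : ∀ n (γ : {γ : Path x y // GoodPath S (s n) γ}),
      ∃ γ' : {γ : Path x y // GoodPath S (s (n + 1)) γ}, ∀ t, dist (γ.1 t) (γ'.1 t) ≤ 2 * s n := by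
    rintro n ⟨γ, h⟩
    obtain ⟨γ', h1, h2⟩ := h.refine hu (hspos (n + 1))
    exact ⟨⟨γ', h1⟩, h2⟩
  choose F hF using step
  let Γ : ∀ n, {γ : Path x y // GoodPath S (s n) γ} := fun n => Nat.rec ⟨γ0, h0⟩ (fun n γ => F n γ) n
  have hΓ : ∀ n t, dist ((Γ n).1 t) ((Γ (n + 1)).1 t) ≤ 2 * s n := fun n t => hF n (Γ n) t
  let G : ℕ → C(unitInterval, ℂ) := fun n => (Γ n).1.toContinuousMap
  have hG : CauchySeq G := by
    refine cauchySeq_of_le_geometric (1 / 2) 2 (by norm_num) fun n => ?_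
    rw [ContinuousMap.dist_le (by positivity)]
    exact fun t => hΓ n t
  obtain ⟨g, hg⟩ := cauchySeq_tendsto_of_complete hG
  have hgt : ∀ t, Tendsto (fun n => (Γ n).1 t) atTop (𝓝 (g t)) := fun t =>
    ((continuous_eval_const t).tendsto g).comp hg
  refine ⟨⟨g, ?_, ?_⟩, fun t => ?_⟩
  · refine tendsto_nhds_unique (hgt 0) ?_
    simp
  · refine tendsto_nhds_unique (hgt 1) ?_
    simp
  · change g t ∈ S
    have hne : ∀ n, ∃ u ∈ S, dist ((Γ n).1 t) u < s n := fun n => (Γ n).2.near t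
    choose u hu1 hu2 using hne
    refine hS.mem_of_tendsto (f := u) (b := atTop) ?_ (Eventually.of_forall hu1)
    have hs0 : Tendsto s atTop (𝓝 0) :=
      tendsto_pow_atTop_nhds_zero_of_lt_one (by norm_num) (by norm_num)
    have : Tendsto (fun n => dist ((Γ n).1 t) (u n)) atTop (𝓝 0) :=
      squeeze_zero (fun _ => dist_nonneg) (fun n => (hu2 n).le) hs0
    exact ((tendsto_iff_of_dist this).mp (hgt t))

def GapFam (Γ : ℝ → ℂ) : Set (Set ℝ) :=
  {C | IsClosed C ∧ C ⊆ Icc 0 1 ∧ (0 : ℝ) ∈ C ∧ (1 : ℝ) ∈ C ∧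
    ∀ a ∈ C, ∀ b ∈ C, a < b → (∀ x ∈ C, a < x → x < b → False) → Γ a = Γ b}

theorem gap_minimal {Γ : ℝ → ℂ} (hΓ : Continuous Γ) : ∃ C, Minimal (· ∈ GapFam Γ) C := by
  have hI : Icc (0 : ℝ) 1 ∈ GapFam Γ := by
    refine ⟨isClosed_Icc, subset_rfl, by simp, by simp, fun a ha b hb hab h => ?_⟩
    exact (h ((a + b) / 2) ⟨by linarith [ha.1, hb.1], by linarith [ha.2, hb.2]⟩ (by linarith)
      (by linarith)).elim
  suffices hZ : ∀ c ⊆ GapFam Γ, IsChain (· ⊆ ·) c → c.Nonempty → ∃ lb ∈ GapFam Γ, ∀ s ∈ c, lb ⊆ s by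
    obtain ⟨m, -, hm⟩ := zorn_superset_nonempty (GapFam Γ) hZ _ hI
    exact ⟨m, hm⟩
  intro c hcS hc hne
  refine ⟨⋂₀ c, ⟨isClosed_sInter fun s hs => (hcS hs).1, ?_, fun s hs => (hcS hs).2.2.1,
    fun s hs => (hcS hs).2.2.2.1, ?_⟩, fun s hs => sInter_subset_of_mem hs⟩
  · obtain ⟨s, hs⟩ := hne
    exact (sInter_subset_of_mem hs).trans (hcS hs).2.1
  intro a ha b hb hab hgap
  refine eq_of_forall_dist_le fun ε hε => ?_
  obtain ⟨δ1, hδ1, h1⟩ := Metric.continuous_iff.mp hΓ a (ε / 2) (by positivity)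
  obtain ⟨δ2, hδ2, h2⟩ := Metric.continuous_iff.mp hΓ b (ε / 2) (by positivity)
  set e := min (min (δ1 / 2) (δ2 / 2)) ((b - a) / 3) with he
  have hba : 0 < b - a := by linarith
  have he0 : 0 < e := by positivity
  have he1 : e ≤ δ1 / 2 := (min_le_left _ _).trans (min_le_left _ _)
  have he2 : e ≤ δ2 / 2 := (min_le_left _ _).trans (min_le_right _ _)
  have he3 : e ≤ (b - a) / 3 := min_le_right _ _
  have : Nonempty c := hne.to_subtype
  obtain ⟨i, hi⟩ := (isCompact_Icc (a := a + e) (b := b - e)).elim_directed_family_closed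
    (fun s : c => (s : Set ℝ)) (fun s => (hcS s.2).1) (by
      rw [← sInter_eq_iInter, eq_empty_iff_forall_notMem]
      rintro x ⟨hx, hxc⟩
      exact hgap x hxc (by linarith [hx.1]) (by linarith [hx.2]))
    (by
      intro s t
      rcases hc.total s.2 t.2 with h | h
      · exact ⟨s, subset_rfl, h⟩
      · exact ⟨t, h, subset_rfl⟩)
  obtain ⟨hcl, hsub, -, -, hg⟩ := hcS i.2
  have hai : a ∈ (i : Set ℝ) := ha i i.2
  have hbi : b ∈ (i : Set ℝ) := hb i i.2
  obtain ⟨a', ha', hamax⟩ := (isCompact_Icc (a := a) (b := a + e)).inter_right hcl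
    |>.exists_isGreatest ⟨a, ⟨le_rfl, by linarith⟩, hai⟩
  obtain ⟨b', hb', hbmin⟩ := (isCompact_Icc (a := b - e) (b := b)).inter_right hcl
    |>.exists_isLeast ⟨b, ⟨by linarith, le_rfl⟩, hbi⟩
  have key := hg a' ha'.2 b' hb'.2 (by linarith [ha'.1.2, hb'.1.1]) (fun x hx hax hxb => by
    rcases le_or_gt x (a + e) with h | h
    · exact absurd (hamax ⟨⟨by linarith [ha'.1.1], h⟩, hx⟩) (not_le.mpr hax)
    · rcases le_or_gt (b - e) x with h' | h'
      · exact absurd (hbmin ⟨⟨h', by linarith [hb'.1.2]⟩, hx⟩) (not_le.mpr hxb)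
      · have : x ∈ Icc (a + e) (b - e) ∩ (i : Set ℝ) := ⟨⟨h.le, h'.le⟩, hx⟩
        rw [hi] at this; exact this)
  have d1 := h1 a' (by rw [Real.dist_eq, abs_lt]; constructor <;> linarith [ha'.1.1, ha'.1.2])
  have d2 := h2 b' (by rw [Real.dist_eq, abs_lt]; constructor <;> linarith [hb'.1.1, hb'.1.2])
  rw [key] at d1
  have := dist_triangle_left (Γ a) (Γ b) (Γ b')
  linarith

theorem gap_minimal_inj {Γ : ℝ → ℂ} {C : Set ℝ} (hC : Minimal (· ∈ GapFam Γ) C) {c d x : ℝ}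
    (hc : c ∈ C) (hd : d ∈ C) (h : Γ c = Γ d) (hx : x ∈ C) (h1 : c < x) (h2 : x < d) : False := by
  obtain ⟨hcl, hsub, h0, h1', hg⟩ := hC.prop
  have hmem : C \ Ioo c d ∈ GapFam Γ := by
    refine ⟨hcl.sdiff isOpen_Ioo, sdiff_subset.trans hsub, ⟨h0, ?_⟩, ⟨h1', ?_⟩, ?_⟩
    · rintro ⟨h3, -⟩; linarith [(hsub hc).1]
    · rintro ⟨-, h3⟩; linarith [(hsub hd).2]
    · rintro a ⟨ha, ha'⟩ b ⟨hb, hb'⟩ hab hgap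
      by_cases hne : ∀ y ∈ C, a < y → y < b → False
      · exact hg a ha b hb hab hne
      · push Not at hne
        obtain ⟨y, hy, hay, hyb, -⟩ := hne
        have hyI : y ∈ Ioo c d := by
          by_contra hyI
          exact hgap y ⟨hy, hyI⟩ hay hyb
        have hca : c ≤ a := by
          by_contra! hlt
          exact hgap c ⟨hc, fun h => lt_irrefl _ h.1⟩ hlt (hyI.1.trans hyb)
        have hbd : b ≤ d := by
          by_contra! hlt
          exact hgap d ⟨hd, fun h => lt_irrefl _ h.2⟩ (hay.trans hyI.2) hlt
        have e1 : c = a := by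
          by_contra hne
          exact ha' ⟨lt_of_le_of_ne hca hne, hay.trans hyI.2⟩
        have e2 : b = d := by
          by_contra hne
          exact hb' ⟨hyI.1.trans hyb, lt_of_le_of_ne hbd hne⟩
        rw [← e1, e2, h]
  have := hC.le_of_le hmem sdiff_subset
  exact (this hx).2 ⟨h1, h2⟩

theorem mono_fibers {Γ : ℝ → ℂ} (hΓ : Continuous Γ) :
    ∃ β : ℝ → ℂ, ContinuousOn β (Icc 0 1) ∧ β 0 = Γ 0 ∧ β 1 = Γ 1 ∧ (∀ t, ∃ s, β t = Γ s ∧ s ∈ Icc (0:ℝ) 1) ∧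
      ∀ s u t, 0 ≤ s → s ≤ u → u ≤ t → t ≤ 1 → β s = β t → β u = β s := by
  obtain ⟨C, hC⟩ := gap_minimal hΓ
  obtain ⟨hcl, hsub, h0, h1, hg⟩ := hC.prop
  have hm : ∀ t, ∃ m, m ∈ C ∧ (t ∈ Icc (0 : ℝ) 1 → IsGreatest (Icc 0 t ∩ C) m) := fun t => by
    by_cases ht : t ∈ Icc (0 : ℝ) 1
    · obtain ⟨m, hm⟩ := ((isCompact_Icc (a := 0) (b := t)).inter_right hcl).exists_isGreatest
        ⟨0, ⟨le_rfl, ht.1⟩, h0⟩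
      exact ⟨m, hm.1.2, fun _ => hm⟩
    · exact ⟨0, h0, fun h => absurd h ht⟩
  choose m hmC hm using hm
  have hmle : ∀ t ∈ Icc (0 : ℝ) 1, m t ≤ t := fun t ht => (hm t ht).1.1.2
  have hmax : ∀ t ∈ Icc (0 : ℝ) 1, ∀ c ∈ C, c ≤ t → c ≤ m t := fun t ht c hc hct =>
    (hm t ht).2 ⟨⟨(hsub hc).1, hct⟩, hc⟩
  have hmono : ∀ s ∈ Icc (0 : ℝ) 1, ∀ t ∈ Icc (0 : ℝ) 1, s ≤ t → m s ≤ m t := fun s hs t ht hst =>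
    hmax t ht _ (hmC s) ((hmle s hs).trans hst)
  have hmself : ∀ c ∈ C, m c = c := fun c hc =>
    le_antisymm (hmle c (hsub hc)) (hmax c (hsub hc) c hc le_rfl)
  refine ⟨fun t => Γ (m t), ?_, by simp only [hmself 0 h0], by simp only [hmself 1 h1],
    fun t => ⟨m t, rfl, hsub (hmC t)⟩, ?_⟩
  · have hdich : ∀ s ∈ Icc (0 : ℝ) 1, ∀ t ∈ Icc (0 : ℝ) 1, s ≤ t → Γ (m s) = Γ (m t) ∨
        ∃ a ∈ Icc s t, ∃ b ∈ Icc s t, Γ (m s) = Γ a ∧ Γ (m t) = Γ b := by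
      intro s hs t ht hst
      rcases lt_or_ge (m t) s with hlt | hge
      · left
        rw [le_antisymm (hmono s hs t ht hst) (hmax s hs _ (hmC t) hlt.le)]
      · right
        obtain ⟨a, ha, hamin⟩ := ((isCompact_Icc (a := s) (b := t)).inter_right hcl).exists_isLeast
          ⟨m t, ⟨hge, hmle t ht⟩, hmC t⟩
        refine ⟨a, ha.1, m t, ⟨hge, hmle t ht⟩, ?_, rfl⟩
        rcases ((hmle s hs).trans ha.1.1).eq_or_lt with h | h
        · rw [h]
        · refine hg _ (hmC s) a ha.2 h fun x hx h2 h3 => ?_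
          rcases le_total x s with h4 | h4
          · exact absurd (hmax s hs x hx h4) (not_le.mpr h2)
          · exact absurd (hamin ⟨⟨h4, h3.le.trans ha.1.2⟩, hx⟩) (not_le.mpr h3)
    have hΓu := (isCompact_Icc (a := (0 : ℝ)) (b := 1)).uniformContinuousOn_of_continuous
      hΓ.continuousOn
    rw [Metric.uniformContinuousOn_iff] at hΓu
    have key : ∀ ε > 0, ∃ δ > 0, ∀ s ∈ Icc (0 : ℝ) 1, ∀ t ∈ Icc (0 : ℝ) 1, s ≤ t → t - s < δ →
        dist (Γ (m s)) (Γ (m t)) < ε := by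
      intro ε hε
      obtain ⟨δ, hδ, h⟩ := hΓu ε hε
      refine ⟨δ, hδ, fun s hs t ht hst hd => ?_⟩
      rcases hdich s hs t ht hst with h5 | ⟨a, ha, b, hb, h5, h6⟩
      · rw [h5, dist_self]; exact hε
      · rw [h5, h6]
        refine h a ⟨by linarith [ha.1, hs.1], by linarith [ha.2, ht.2]⟩ b
          ⟨by linarith [hb.1, hs.1], by linarith [hb.2, ht.2]⟩ ?_
        rw [Real.dist_eq, abs_lt]; constructor <;> linarith [ha.1, ha.2, hb.1, hb.2]
    rw [Metric.continuousOn_iff]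
    intro t ht ε hε
    obtain ⟨δ, hδ, h⟩ := key ε hε
    refine ⟨δ, hδ, fun s hs hd => ?_⟩
    rw [Real.dist_eq, abs_lt] at hd
    rcases le_total s t with hst | hst
    · exact h s hs t ht hst (by linarith)
    · rw [dist_comm]; exact h t ht s hs hst (by linarith)
  · intro s u t hs hsu hut ht h
    have hs' : s ∈ Icc (0 : ℝ) 1 := ⟨hs, by linarith⟩
    have hu' : u ∈ Icc (0 : ℝ) 1 := ⟨by linarith, by linarith⟩
    have ht' : t ∈ Icc (0 : ℝ) 1 := ⟨by linarith, ht⟩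
    have a1 := hmono s hs' u hu' hsu
    have a2 := hmono u hu' t ht' hut
    simp only at h ⊢
    rcases a1.eq_or_lt with e | e
    · rw [e]
    · rcases a2.eq_or_lt with e2 | e2
      · rw [e2, h]
      · exact (gap_minimal_inj hC (hmC s) (hmC t) h (hmC u) e e2).elim

theorem quot_cont {Y Z E : Type*} [TopologicalSpace Y] [TopologicalSpace Z] [T2Space Z]
    [TopologicalSpace E] {K : Set Y} (hK : IsCompact K) {τ : Y → Z} (hτ : ContinuousOn τ K)
    {β : Y → E} (hβ : ContinuousOn β K) {α : Z → E} (h : ∀ y ∈ K, α (τ y) = β y) :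
    ContinuousOn α (τ '' K) := by
  rw [continuousOn_iff_isClosed]
  intro F hF
  obtain ⟨u, hu, he⟩ := continuousOn_iff_isClosed.mp hβ F hF
  refine ⟨τ '' (u ∩ K), ?_, ?_⟩
  · exact ((hK.inter_left hu).image_of_continuousOn (hτ.mono inter_subset_right)).isClosed
  · rw [← he]
    ext z
    constructor
    · rintro ⟨hz, y, hy, rfl⟩
      exact ⟨⟨y, ⟨by rw [mem_preimage, ← h y hy]; exact hz, hy⟩, rfl⟩, ⟨y, hy, rfl⟩⟩
    · rintro ⟨⟨y, ⟨hy1, hy⟩, rfl⟩, h2⟩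
      exact ⟨by rw [mem_preimage, h y hy]; exact hy1, h2⟩

theorem exists_tau {β : ℝ → ℂ} (hβ : Continuous β)
    (hfib : ∀ s u t, 0 ≤ s → s ≤ u → u ≤ t → t ≤ 1 → β s = β t → β u = β s) :
    ∃ τ : ℝ → ℝ, Continuous τ ∧ MonotoneOn τ (Icc 0 1) ∧
      ∀ s ∈ Icc (0 : ℝ) 1, ∀ t ∈ Icc (0 : ℝ) 1, τ s = τ t ↔ β s = β t := by
  set g : ℚ → ℝ → ℝ := fun q s => min 1 (infDist (β s) (β '' Icc 0 (q : ℝ))) with hg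
  have hgc : ∀ q, Continuous (g q) := fun q =>
    continuous_const.min ((continuous_infDist_pt _).comp hβ)
  have hg1 : ∀ q s, g q s ≤ 1 := fun q s => min_le_left _ _
  have hg0 : ∀ q s, 0 ≤ g q s := fun q s => le_min zero_le_one infDist_nonneg
  set M : ℚ → ℝ → ℝ := fun q t => sSup ((fun u => g q (u * t)) '' Icc 0 1) with hM
  have hMc : ∀ q, Continuous (M q) := fun q =>
    isCompact_Icc.continuous_sSup (f := fun t u => g q (u * t))
      ((hgc q).comp (continuous_snd.mul continuous_fst))
  have hbdd : ∀ q t, BddAbove ((fun u => g q (u * t)) '' Icc (0 : ℝ) 1) := fun q t =>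
    ⟨1, by rintro _ ⟨u, -, rfl⟩; exact hg1 _ _⟩
  have hne : ∀ q t, ((fun u => g q (u * t)) '' Icc (0 : ℝ) 1).Nonempty := fun q t =>
    ⟨_, 0, by simp, rfl⟩
  have hM1 : ∀ q t, M q t ≤ 1 := fun q t => csSup_le (hne q t) (by
    rintro _ ⟨u, -, rfl⟩; exact hg1 _ _)
  have hM0 : ∀ q t, 0 ≤ M q t := fun q t =>
    (hg0 q _).trans (le_csSup (hbdd q t) ⟨0, by simp, rfl⟩)
  have hgM : ∀ q s t, 0 ≤ s → s ≤ t → g q s ≤ M q t := by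
    intro q s t hs hst
    rcases (hs.trans hst).eq_or_lt with h | h
    · have : s = 0 := by linarith
      refine le_csSup (hbdd q t) ⟨0, by simp, ?_⟩
      simp [this]
    · refine le_csSup (hbdd q t) ⟨s / t, ⟨by positivity, by rw [div_le_one h]; exact hst⟩, ?_⟩
      simp only [div_mul_cancel₀ s h.ne']
  have hMle : ∀ q t a, 0 ≤ t → (∀ s, 0 ≤ s → s ≤ t → g q s ≤ a) → M q t ≤ a := by
    intro q t a ht h
    refine csSup_le (hne q t) ?_
    rintro _ ⟨u, hu, rfl⟩
    exact h _ (mul_nonneg hu.1 ht) (mul_le_of_le_one_left ht hu.2)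
  have hMmono : ∀ q s t, 0 ≤ s → s ≤ t → M q s ≤ M q t := fun q s t hs hst =>
    hMle q s _ hs fun x hx hxs => hgM q x t hx (hxs.trans hst)
  have hu : Summable fun q : ℚ => (1 / 2 : ℝ) ^ Encodable.encode q := summable_geometric_two_encode
  have hle : ∀ q t, (1 / 2 : ℝ) ^ Encodable.encode q * M q t ≤ (1 / 2 : ℝ) ^ Encodable.encode q :=
    fun q t => mul_le_of_le_one_right (by positivity) (hM1 q t)
  have hnn : ∀ q t, 0 ≤ (1 / 2 : ℝ) ^ Encodable.encode q * M q t :=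
    fun q t => mul_nonneg (by positivity) (hM0 q t)
  have hsum : ∀ t, Summable fun q : ℚ => (1 / 2 : ℝ) ^ Encodable.encode q * M q t := fun t =>
    Summable.of_nonneg_of_le (fun q => hnn q t) (fun q => hle q t) hu
  set τ : ℝ → ℝ := fun t => ∑' q : ℚ, (1 / 2 : ℝ) ^ Encodable.encode q * M q t with hτ
  have hτm : ∀ s t, 0 ≤ s → s ≤ t → τ s ≤ τ t := fun s t hs hst =>
    (hsum s).tsum_le_tsum (fun q => mul_le_mul_of_nonneg_left (hMmono q s t hs hst) (by positivity))
      (hsum t)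
  have hmain : ∀ s t, 0 ≤ s → s ≤ t → t ≤ 1 → (τ s = τ t ↔ β s = β t) := by
    intro s t hs hst ht
    constructor
    · intro h
      by_contra hne
      -- first point of the fiber of t
      obtain ⟨d, hd, hdmin⟩ := ((isCompact_Icc (a := s) (b := t)).inter_right
        (isClosed_singleton.preimage hβ)).exists_isLeast
        (⟨t, ⟨hst, le_rfl⟩, rfl⟩ : (Icc s t ∩ β ⁻¹' {β t}).Nonempty)
      have hdt : β d = β t := hd.2
      have hsd : s < d := lt_of_le_of_ne hd.1.1 (fun e => hne (by rw [e, hdt]))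
      obtain ⟨q, hq1, hq2⟩ := exists_rat_btwn hsd
      have hMs : M q s ≤ 0 := hMle q s 0 hs fun x hx hxs => by
        have : infDist (β x) (β '' Icc 0 (q : ℝ)) = 0 :=
          infDist_zero_of_mem ⟨x, ⟨hx, by linarith⟩, rfl⟩
        simp only [hg, this]; simp
      have hMt : 0 < M q t := by
        refine lt_of_lt_of_le ?_ (hgM q t t (hs.trans hst) le_rfl)
        refine lt_min one_pos ?_
        refine (IsClosed.notMem_iff_infDist_pos
          (isCompact_Icc.image hβ).isClosed ⟨_, 0, ⟨le_rfl, by linarith⟩, rfl⟩).mp ?_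
        rintro ⟨x, hx, hxt⟩
        rcases le_total s x with hsx | hsx
        · have := hdmin ⟨⟨hsx, by linarith [hx.2, hd.1.2]⟩, hxt⟩
          linarith [hx.2]
        · have := hfib x s t hx.1 hsx hst ht hxt
          exact hne (by rw [this, hxt])
      have : τ s < τ t := (hsum s).tsum_lt_tsum (i := q)
        (fun q => mul_le_mul_of_nonneg_left (hMmono q s t hs hst) (by positivity))
        (mul_lt_mul_of_pos_left (by linarith) (by positivity)) (hsum t)
      linarith
    · intro h
      refine le_antisymm (hτm s t hs hst) ?_
      refine (hsum t).tsum_le_tsum (fun q => mul_le_mul_of_nonneg_left ?_ (by positivity)) (hsum s)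
      refine hMle q t _ (hs.trans hst) fun x hx hxt => ?_
      rcases le_total x s with hxs | hxs
      · exact hgM q x s hx hxs
      · have : g q x = g q s := by simp only [hg]; rw [hfib s x t hs hxs hxt ht h]
        rw [this]; exact hgM q s s hs le_rfl
  refine ⟨τ, ?_, fun s hs t ht hst => hτm s t hs.1 hst, fun s hs t ht => ?_⟩
  · refine continuous_tsum (fun q => continuous_const.mul (hMc q)) hu fun q t => ?_
    rw [Real.norm_of_nonneg (hnn q t)]; exact hle q t
  · rcases le_total s t with hst | hst
    · exact hmain s t hs.1 hst ht.2
    · rw [eq_comm, hmain t s ht.1 hst hs.2, eq_comm]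

theorem arc_extraction {Γ : ℝ → ℂ} (hΓ : Continuous Γ) (hne : Γ 0 ≠ Γ 1) :
    ∃ (A B : ℝ) (α : ℝ → ℂ), A < B ∧ ContinuousOn α (Icc A B) ∧ InjOn α (Icc A B) ∧
      α A = Γ 0 ∧ α B = Γ 1 ∧ ∀ t ∈ Icc A B, ∃ s ∈ Icc (0 : ℝ) 1, α t = Γ s := by
  obtain ⟨β0, hβ0, h00, h01, hr, hfib⟩ := mono_fibers hΓ
  set β : ℝ → ℂ := fun t => β0 (projIcc 0 1 zero_le_one t) with hβ
  have hβeq : ∀ t ∈ Icc (0 : ℝ) 1, β t = β0 t := fun t ht => by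
    simp only [hβ]; rw [projIcc_of_mem _ ht]
  have hβc : Continuous β :=
    (continuousOn_iff_continuous_domRestrict.mp hβ0).comp continuous_projIcc
  obtain ⟨τ, hτc, hτm, hτ⟩ := exists_tau hβc (fun s u t hs hsu hut ht h => by
    have hs' : s ∈ Icc (0 : ℝ) 1 := ⟨hs, by linarith⟩
    have hu' : u ∈ Icc (0 : ℝ) 1 := ⟨by linarith, by linarith⟩
    have ht' : t ∈ Icc (0 : ℝ) 1 := ⟨by linarith, ht⟩
    rw [hβeq u hu', hβeq s hs']
    rw [hβeq t ht', hβeq s hs'] at h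
    exact hfib s u t hs hsu hut ht h)
  have m0 : (0 : ℝ) ∈ Icc (0 : ℝ) 1 := by simp
  have m1 : (1 : ℝ) ∈ Icc (0 : ℝ) 1 := by simp
  have himg : τ '' Icc 0 1 = Icc (τ 0) (τ 1) := by
    apply Subset.antisymm
    · rintro _ ⟨t, ht, rfl⟩
      exact ⟨hτm m0 ht ht.1, hτm ht m1 ht.2⟩
    · exact intermediate_value_Icc zero_le_one hτc.continuousOn
  have hlt : τ 0 < τ 1 := lt_of_le_of_ne (hτm m0 m1 zero_le_one) (fun h => hne (by
    have := (hτ 0 m0 1 m1).mp h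
    rwa [hβeq 0 m0, hβeq 1 m1, h00, h01] at this))
  set σ : ℝ → ℝ := Function.invFunOn τ (Icc 0 1) with hσ
  have hσm : ∀ x ∈ Icc (τ 0) (τ 1), σ x ∈ Icc (0 : ℝ) 1 ∧ τ (σ x) = x := fun x hx => by
    rw [← himg] at hx
    exact ⟨Function.invFunOn_mem hx, Function.invFunOn_eq hx⟩
  have hα : ∀ t ∈ Icc (0 : ℝ) 1, β (σ (τ t)) = β t := fun t ht => by
    have h1 : τ t ∈ Icc (τ 0) (τ 1) := himg ▸ ⟨t, ht, rfl⟩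
    obtain ⟨h2, h3⟩ := hσm _ h1
    exact (hτ _ h2 t ht).mp h3
  refine ⟨τ 0, τ 1, fun x => β (σ x), hlt, ?_, ?_, ?_, ?_, ?_⟩
  · rw [← himg]
    exact quot_cont (α := fun x => β (σ x)) isCompact_Icc hτc.continuousOn hβc.continuousOn hα
  · intro x hx y hy h
    obtain ⟨h2, h3⟩ := hσm x hx
    obtain ⟨h4, h5⟩ := hσm y hy
    rw [← h3, ← h5]
    exact (hτ _ h2 _ h4).mpr h
  · simp only [hα 0 m0, hβeq 0 m0, h00]
  · simp only [hα 1 m1, hβeq 1 m1, h01]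
  · intro t ht
    obtain ⟨s, hs, hs2⟩ := hr (projIcc 0 1 zero_le_one (σ t))
    exact ⟨s, hs2, hs⟩

def ExpPre (K0 : Set ℂ) (p : ℂ) : Set ℂ := {w | p + Complex.exp w ∈ K0}

theorem expPre_closed {K0 : Set ℂ} (hK : IsClosed K0) (p : ℂ) : IsClosed (ExpPre K0 p) :=
  hK.preimage (f := fun w => p + Complex.exp w) (by fun_prop)

/-- lifting a small connected set through the exponential -/
theorem lift_conn {K0 C : Set ℂ} {p w : ℂ} (hC : IsPreconnected C) (hCK : C ⊆ K0) (hpK : p ∉ K0)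
    (hs : ∀ z ∈ C, dist z (p + Complex.exp w) < ‖Complex.exp w‖) :
    IsPreconnected ((fun z => w + Complex.log ((z - p) / Complex.exp w)) '' C) ∧
      (fun z => w + Complex.log ((z - p) / Complex.exp w)) '' C ⊆ ExpPre K0 p := by
  have hne : ∀ z ∈ C, (z - p) / Complex.exp w ≠ 0 := fun z hz =>
    div_ne_zero (sub_ne_zero.mpr fun h => hpK (h ▸ hCK hz)) (Complex.exp_ne_zero _)
  constructor
  · refine hC.image _ (continuousOn_const.add (ContinuousOn.clog (by fun_prop) fun z hz => ?_))
    apply slit_of_near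
    have := hs z hz
    rwa [dist_eq_norm, ← sub_sub] at this
  · rintro _ ⟨z, hz, rfl⟩
    change p + Complex.exp _ ∈ K0
    rw [Complex.exp_add, Complex.exp_log (hne z hz), mul_div_cancel₀ _ (Complex.exp_ne_zero _)]
    simpa using hCK hz

theorem expPre_ulc {K0 : Set ℂ} (hK : IsCompact K0) (hne : K0.Nonempty) (hu : ULC K0) {p : ℂ}
    (hp : p ∉ K0) : ULC (ExpPre K0 p) := by
  intro ε hε
  set d := infDist p K0
  have hd : 0 < d := (hK.isClosed.notMem_iff_infDist_pos hne).mp hp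
  have hdle : ∀ w ∈ ExpPre K0 p, d ≤ ‖Complex.exp w‖ := fun w hw => by
    have := infDist_le_dist_of_mem (x := p) (show p + Complex.exp w ∈ K0 from hw)
    rwa [dist_eq_norm, sub_add_cancel_left, norm_neg] at this
  obtain ⟨M, hM⟩ := hK.isBounded.subset_closedBall p
  have hMle : ∀ w ∈ ExpPre K0 p, ‖Complex.exp w‖ ≤ M := fun w hw => by
    have : dist (p + Complex.exp w) p ≤ M := hM hw
    rwa [dist_eq_norm, add_sub_cancel_left] at this
  obtain ⟨δ1, hδ1, h1⟩ := Metric.continuousAt_iff.mp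
    (continuousAt_clog Complex.one_mem_slitPlane) ε hε
  simp only [Complex.log_one, dist_zero_right] at h1
  obtain ⟨δ2, hδ2, h2⟩ := hu (d * min δ1 1) (by positivity)
  have hMp : 0 < |M| + 1 := by positivity
  obtain ⟨δ3, hδ3, h3⟩ := Metric.continuousAt_iff.mp (Complex.continuous_exp.continuousAt (x := 0))
    (δ2 / (|M| + 1)) (by positivity)
  simp only [Complex.exp_zero, dist_zero_right] at h3
  refine ⟨min δ3 1, by positivity, fun x hx y hy hxy => ?_⟩
  have hx1 : ‖y - x‖ < δ3 := by
    rw [← dist_eq_norm, dist_comm]; exact hxy.trans_le (min_le_left _ _)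
  have hx2 : ‖y - x‖ < 1 := by
    rw [← dist_eq_norm, dist_comm]; exact hxy.trans_le (min_le_right _ _)
  have hexp : dist (p + Complex.exp x) (p + Complex.exp y) < δ2 := by
    rw [dist_comm, dist_eq_norm, add_sub_add_left_eq_sub]
    have e : Complex.exp y - Complex.exp x = Complex.exp x * (Complex.exp (y - x) - 1) := by
      rw [mul_sub, ← Complex.exp_add]; simp
    rw [e, norm_mul]
    have := h3 hx1
    rw [dist_eq_norm, lt_div_iff₀ hMp] at this
    have h4 : ‖Complex.exp x‖ ≤ |M| + 1 := (hMle x hx).trans (by linarith [le_abs_self M])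
    calc _ ≤ (|M| + 1) * ‖Complex.exp (y - x) - 1‖ := by gcongr
      _ < _ := by rwa [mul_comm]
  obtain ⟨C, hCK, hC, hxC, hyC, hCs⟩ := h2 _ hx _ hy hexp
  have hmin1 : min δ1 1 ≤ δ1 := min_le_left _ _
  have hmin2 : min δ1 1 ≤ 1 := min_le_right _ _
  have hdx := hdle x hx
  have hsC : ∀ z ∈ C, dist z (p + Complex.exp x) < ‖Complex.exp x‖ := fun z hz => by
    have := hCs z hz
    nlinarith
  obtain ⟨a1, a2⟩ := lift_conn hC hCK hp hsC
  refine ⟨_, a2, a1, ⟨_, hxC, ?_⟩, ⟨_, hyC, ?_⟩, ?_⟩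
  · simp [Complex.exp_ne_zero]
  · simp only [add_sub_cancel_left]
    rw [← Complex.exp_sub, Complex.log_exp]
    · ring
    · have := (abs_le.mp ((Complex.abs_im_le_norm (y - x)))).1
      have := Real.pi_gt_three
      linarith
    · have := (abs_le.mp ((Complex.abs_im_le_norm (y - x)))).2
      have := Real.pi_gt_three
      linarith
  · rintro _ ⟨z, hz, rfl⟩
    rw [dist_eq_norm, add_sub_cancel_left]
    apply h1
    rw [dist_eq_norm]
    have e : (z - p) / Complex.exp x - 1 = (z - (p + Complex.exp x)) / Complex.exp x := by
      field_simp [Complex.exp_ne_zero]; ring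
    rw [e, norm_div, ← dist_eq_norm, div_lt_iff₀ (by linarith)]
    have := hCs z hz
    calc _ < d * min δ1 1 := this
      _ ≤ ‖Complex.exp x‖ * δ1 := by gcongr
      _ = _ := mul_comm _ _

theorem exists_wrap {K0 : Set ℂ} (hK : IsCompact K0) (hconn : IsConnected K0) (hu : ULC K0) {p : ℂ}
    (hp : p ∉ K0) (hnl : ¬ HasLog (fun z => z - p) K0) :
    ∃ C ⊆ ExpPre K0 p, IsPreconnected C ∧ ∃ x ∈ C, ∃ y ∈ C, x ≠ y ∧ Complex.exp x = Complex.exp y := by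
  by_contra! hno
  apply hnl
  obtain ⟨z0, hz0⟩ := hconn.nonempty
  set d := infDist p K0
  have hd : 0 < d := (hK.isClosed.notMem_iff_infDist_pos hconn.nonempty).mp hp
  have hdle : ∀ z ∈ K0, d ≤ ‖z - p‖ := fun z hz => by
    have := infDist_le_dist_of_mem (x := p) hz
    rwa [dist_comm, dist_eq_norm] at this
  obtain ⟨δ, hδ, hul⟩ := hu d hd
  have hzp : ∀ z ∈ K0, z - p ≠ 0 := fun z hz => sub_ne_zero.mpr fun h => hp (h ▸ hz)
  have hstep : ∀ x ∈ K0, ∀ y ∈ K0, dist x y < δ → ∀ w, p + Complex.exp w = x →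
      ∃ C ⊆ ExpPre K0 p, IsPreconnected C ∧ w ∈ C ∧
        w + Complex.log ((y - p) / Complex.exp w) ∈ C := by
    intro x hx y hy hxy w hw
    obtain ⟨C, hCK, hC, hxC, hyC, hCs⟩ := hul x hx y hy hxy
    have hew : Complex.exp w = x - p := by rw [← hw]; ring
    obtain ⟨a1, a2⟩ := lift_conn (w := w) hC hCK hp (fun z hz => by
      rw [hw, hew]; exact (hCs z hz).trans_le (hdle x hx))
    refine ⟨_, a2, a1, ⟨x, hxC, ?_⟩, ⟨y, hyC, rfl⟩⟩
    simp only [hew]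
    rw [div_self (hzp x hx)]; simp
  have hw0 : p + Complex.exp (Complex.log (z0 - p)) = z0 := by
    rw [Complex.exp_log (hzp z0 hz0)]; ring
  set w0 := Complex.log (z0 - p)
  set Q := connectedComponentIn (ExpPre K0 p) w0 with hQ
  have hw0S : w0 ∈ ExpPre K0 p := by change p + Complex.exp w0 ∈ K0; rw [hw0]; exact hz0
  have hQS : Q ⊆ ExpPre K0 p := connectedComponentIn_subset _ _
  have hQc : IsPreconnected Q := isPreconnected_connectedComponentIn
  have hext : ∀ C ⊆ ExpPre K0 p, IsPreconnected C → ∀ w ∈ C, w ∈ Q → C ⊆ Q := by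
    intro C hC hCc w hwC hwQ
    rw [hQ, connectedComponentIn_eq hwQ]
    exact hCc.subset_connectedComponentIn hwC hC
  have hstepQ : ∀ x ∈ K0, ∀ y ∈ K0, dist x y < δ → ∀ w ∈ Q, p + Complex.exp w = x →
      w + Complex.log ((y - p) / Complex.exp w) ∈ Q := by
    intro x hx y hy hxy w hwQ hw
    obtain ⟨C, hC, hCc, h1, h2⟩ := hstep x hx y hy hxy w hw
    exact hext C hC hCc w h1 hwQ h2
  have hval : ∀ y ∈ K0, ∀ w, p + Complex.exp (w + Complex.log ((y - p) / Complex.exp w)) = y := by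
    intro y hy w
    rw [Complex.exp_add, Complex.exp_log (div_ne_zero (hzp y hy) (Complex.exp_ne_zero _)),
      mul_div_cancel₀ _ (Complex.exp_ne_zero _)]
    ring
  have hsurj : ∀ z ∈ K0, ∃ w ∈ Q, p + Complex.exp w = z := by
    intro z hz
    refine hconn.isPreconnected.induction₂' (fun x y => (∃ w ∈ Q, p + Complex.exp w = x) →
      ∃ w ∈ Q, p + Complex.exp w = y) ?_ ?_ hz0 hz ⟨w0, mem_connectedComponentIn hw0S, hw0⟩
    · intro x hx
      filter_upwards [inter_mem_nhdsWithin K0 (ball_mem_nhds x hδ)] with y hy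
      have hyx : dist y x < δ := hy.2
      constructor
      · rintro ⟨w, hw, he⟩
        exact ⟨_, hstepQ x hx y hy.1 (by rwa [dist_comm]) w hw he, hval y hy.1 w⟩
      · rintro ⟨w, hw, he⟩
        exact ⟨_, hstepQ y hy.1 x hx hyx w hw he, hval x hx w⟩
    · intro x y z _ _ _ h1 h2 h
      exact h2 (h1 h)
  have hl : ∀ z, ∃ w, z ∈ K0 → w ∈ Q ∧ p + Complex.exp w = z := fun z => by
    by_cases hz : z ∈ K0
    · obtain ⟨w, h⟩ := hsurj z hz; exact ⟨w, fun _ => h⟩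
    · exact ⟨0, fun h => absurd h hz⟩
  choose l hl using hl
  refine ⟨l, fun z hz => ?_, fun z hz => ?_⟩
  · obtain ⟨h1, h2⟩ := hl z hz
    have : l =ᶠ[𝓝[K0] z] fun y => l z + Complex.log ((y - p) / Complex.exp (l z)) := by
      filter_upwards [inter_mem_nhdsWithin K0 (ball_mem_nhds z hδ)] with y hy
      obtain ⟨h3, h4⟩ := hl y hy.1
      have h5 := hstepQ z hz y hy.1 (by rw [dist_comm]; exact hy.2) _ h1 h2
      by_contra hne
      refine hno Q hQS hQc _ h3 _ h5 hne ?_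
      have := hval y hy.1 (l z)
      exact add_left_cancel (h4.trans this.symm)
    refine ContinuousWithinAt.congr_of_eventuallyEq ?_ this (this.eq_of_nhdsWithin hz)
    refine ContinuousAt.continuousWithinAt (continuousAt_const.add (ContinuousAt.clog (by fun_prop) ?_))
    have hew : Complex.exp (l z) = z - p := by rw [eq_sub_iff_add_eq, add_comm]; exact h2
    rw [hew, div_self (hzp z hz)]
    exact Complex.one_mem_slitPlane
  · have := (hl z hz).2
    change z - p = Complex.exp (l z)
    rw [sub_eq_iff_eq_add, add_comm]; exact this.symm

theorem exists_simple_loop {K0 : Set ℂ} (hK : IsCompact K0) (hconn : IsConnected K0) (hu : ULC K0)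
    {p : ℂ} (hp : p ∉ K0) (hnl : ¬ HasLog (fun z => z - p) K0) :
    ∃ (a b : ℝ) (α : ℝ → ℂ), a < b ∧ Continuous α ∧ (∀ t ∈ Icc a b, p + Complex.exp (α t) ∈ K0) ∧
      Complex.exp (α a) = Complex.exp (α b) ∧ α a ≠ α b ∧
      ∀ s t, a ≤ s → s < t → t ≤ b → Complex.exp (α s) = Complex.exp (α t) → s = a ∧ t = b := by
  obtain ⟨C, hCS, hC, x, hx, y, hy, hxy, hexy⟩ := exists_wrap hK hconn hu hp hnl
  obtain ⟨γ, hγ⟩ := path_of_ulc (expPre_closed hK.isClosed p)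
    (expPre_ulc hK hconn.nonempty hu hp) hC hCS hx hy
  obtain ⟨A, B, α, hAB, hαc, hαi, hαA, hαB, hαr⟩ := arc_extraction γ.continuous_extend
    (by simpa using hxy)
  simp only [Path.extend_zero, Path.extend_one] at hαA hαB
  set α' : ℝ → ℂ := fun t => α (projIcc A B hAB.le t) with hα'
  have heq : ∀ t ∈ Icc A B, α' t = α t := fun t ht => by
    simp only [hα']; rw [projIcc_of_mem _ ht]
  have hc : Continuous α' := (continuousOn_iff_continuous_domRestrict.mp hαc).comp continuous_projIcc
  have hinj : ∀ s ∈ Icc A B, ∀ t ∈ Icc A B, α' s = α' t → s = t := fun s hs t ht h => by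
    rw [heq s hs, heq t ht] at h; exact hαi hs ht h
  have hmem : ∀ t ∈ Icc A B, p + Complex.exp (α' t) ∈ K0 := fun t ht => by
    obtain ⟨s, hs, h⟩ := hαr t ht
    rw [heq t ht, h, Path.extend_apply _ hs]
    exact hγ _
  have hfar : ∀ s t, Complex.exp (α' s) = Complex.exp (α' t) → α' s ≠ α' t →
      2 * Real.pi ≤ ‖α' s - α' t‖ := by
    intro s t he hne
    obtain ⟨n, hn⟩ := Complex.exp_eq_exp_iff_exists_int.mp he
    have hn0 : n ≠ 0 := by rintro rfl; apply hne; rw [hn]; simp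
    have h1 : (1 : ℝ) ≤ |(n : ℝ)| := by exact_mod_cast Int.one_le_abs hn0
    rw [hn, add_sub_cancel_left, norm_mul, Complex.norm_intCast]
    have : ‖(2 * Real.pi * Complex.I : ℂ)‖ = 2 * Real.pi := by
      simp [abs_of_pos Real.pi_pos]
    rw [this]
    nlinarith [Real.pi_pos]
  set T : Set (ℝ × ℝ) := (Icc A B ×ˢ Icc A B) ∩ {x | x.1 ≤ x.2 ∧
    Complex.exp (α' x.1) = Complex.exp (α' x.2) ∧ 2 * Real.pi ≤ ‖α' x.1 - α' x.2‖} with hT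
  have hTc : IsCompact T := by
    refine (isCompact_Icc.prod isCompact_Icc).inter_right ?_
    refine (isClosed_le continuous_fst continuous_snd).inter
      ((isClosed_eq (f := fun x : ℝ × ℝ => Complex.exp (α' x.1))
        (g := fun x : ℝ × ℝ => Complex.exp (α' x.2)) (by fun_prop) (by fun_prop)).inter ?_)
    exact isClosed_le (f := fun _ : ℝ × ℝ => 2 * Real.pi)
      (g := fun x : ℝ × ℝ => ‖α' x.1 - α' x.2‖) (by fun_prop) (by fun_prop)
  have hA : A ∈ Icc A B := ⟨le_rfl, hAB.le⟩
  have hB : B ∈ Icc A B := ⟨hAB.le, le_rfl⟩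
  have hTne : T.Nonempty := by
    have he : Complex.exp (α' A) = Complex.exp (α' B) := by
      rw [heq A hA, heq B hB, hαA, hαB, hexy]
    exact ⟨(A, B), ⟨hA, hB⟩, hAB.le, he, hfar A B he fun h => hAB.ne (hinj A hA B hB h)⟩
  obtain ⟨⟨a, b⟩, hab, hmin⟩ := hTc.exists_isMinOn hTne
    (f := fun x : ℝ × ℝ => x.2 - x.1) (by fun_prop)
  obtain ⟨⟨ha, hb⟩, hle, he, hf⟩ := hab
  simp only at ha hb hle he hf
  have hne : α' a ≠ α' b := fun h => by
    rw [h, sub_self, norm_zero] at hf; linarith [Real.pi_pos]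
  have hlt : a < b := lt_of_le_of_ne hle fun h => hne (by rw [h])
  refine ⟨a, b, α', hlt, hc, fun t ht => hmem t ⟨ha.1.trans ht.1, ht.2.trans hb.2⟩, he, hne, ?_⟩
  intro s t hs hst ht hest
  have hsI : s ∈ Icc A B := ⟨by linarith [ha.1], by linarith [hb.2]⟩
  have htI : t ∈ Icc A B := ⟨by linarith [ha.1], by linarith [hb.2]⟩
  have : b - a ≤ t - s := hmin (show (s, t) ∈ T from
    ⟨⟨hsI, htI⟩, hst.le, hest, hfar s t hest fun h => hst.ne (hinj s hsI t htI h)⟩)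
  constructor <;> linarith

theorem loop_desc {ψ : ℝ → ℂ} {a b : ℝ} (hψ : ContinuousOn ψ (Icc a b))
    (hinj : ∀ s t, a ≤ s → s < t → t ≤ b → ψ s = ψ t → s = a ∧ t = b)
    {β : ℝ → ℂ} (hβ : ContinuousOn β (Icc a b)) (hab : β a = β b) :
    ∃ g : ℂ → ℂ, ContinuousOn g (ψ '' Icc a b) ∧ ∀ t ∈ Icc a b, g (ψ t) = β t := by
  have key : ∀ t ∈ Icc a b, β (Function.invFunOn ψ (Icc a b) (ψ t)) = β t := by
    intro t ht
    have h1 : ∃ s ∈ Icc a b, ψ s = ψ t := ⟨t, ht, rfl⟩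
    have h2 := Function.invFunOn_mem h1
    have h3 := Function.invFunOn_eq h1
    set s := Function.invFunOn ψ (Icc a b) (ψ t)
    rcases lt_trichotomy s t with h | h | h
    · obtain ⟨h4, h5⟩ := hinj s t h2.1 h ht.2 h3
      rw [h4, h5, hab]
    · rw [h]
    · obtain ⟨h4, h5⟩ := hinj t s ht.1 h h2.2 h3.symm
      rw [h4, h5, hab]
  exact ⟨fun z => β (Function.invFunOn ψ (Icc a b) z), quot_cont isCompact_Icc hψ hβ key, key⟩

/-- Standard parametrisation of the unit circle by `[a,b]`. -/
noncomputable def circPar (a b t : ℝ) : ℂ :=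
  Complex.exp (((2 * Real.pi * ((t - a) / (b - a)) : ℝ) : ℂ) * Complex.I)

theorem circPar_cont (a b : ℝ) : Continuous (circPar a b) := by
  unfold circPar; fun_prop

theorem circPar_norm (a b t : ℝ) : ‖circPar a b t‖ = 1 := by
  unfold circPar; exact Complex.norm_exp_ofReal_mul_I _

theorem circPar_ends {a b : ℝ} (hab : a < b) : circPar a b a = circPar a b b := by
  unfold circPar
  rw [div_self (by linarith : b - a ≠ 0)]
  simp

theorem circPar_inj {a b : ℝ} (hab : a < b) :
    ∀ s t, a ≤ s → s < t → t ≤ b → circPar a b s = circPar a b t → s = a ∧ t = b := by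
  intro s t hs hst ht h
  unfold circPar at h
  obtain ⟨n, hn⟩ := Complex.exp_eq_exp_iff_exists_int.mp h
  have hba : 0 < b - a := by linarith
  have hpi := Real.pi_pos
  have h2 : (s - a) / (b - a) = (t - a) / (b - a) + n := by
    generalize (s - a) / (b - a) = x at hn ⊢
    generalize (t - a) / (b - a) = y at hn ⊢
    have hI := congrArg Complex.im hn
    simp at hI
    have : 2 * Real.pi * x = 2 * Real.pi * (y + n) := by
      rw [hI]; ring
    exact mul_left_cancel₀ (by positivity) this
  have h3 : s = t + n * (b - a) := by
    field_simp at h2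
    linarith
  have h4 : (n : ℝ) < 0 := by
    by_contra hc
    push Not at hc
    nlinarith
  have h5 : n ≤ -1 := by
    have : n < 0 := by exact_mod_cast h4
    omega
  have h6 : (n : ℝ) ≤ -1 := by exact_mod_cast h5
  constructor <;> nlinarith

theorem circPar_surj {a b : ℝ} (hab : a < b) {c : ℂ} (hc : ‖c‖ = 1) :
    c ∈ circPar a b '' Icc a b := by
  have hba : 0 < b - a := by linarith
  have hpi := Real.pi_pos
  have h1 : Complex.exp (c.arg * Complex.I) = c := by
    have := Complex.norm_mul_exp_arg_mul_I c
    rwa [hc, Complex.ofReal_one, one_mul] at this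
  have h2 := Complex.neg_pi_lt_arg c
  have h3 := Complex.arg_le_pi c
  have key : ∀ x : ℝ, 0 ≤ x → x ≤ 1 → Complex.exp ((2 * Real.pi * x : ℝ) * Complex.I) = c →
      c ∈ circPar a b '' Icc a b := by
    intro x h0 h1 he
    refine ⟨a + x * (b - a), ⟨by nlinarith, by nlinarith⟩, ?_⟩
    unfold circPar
    rw [← he]
    congr 4
    field_simp
    ring
  rcases le_or_gt 0 c.arg with h | h
  · refine key (c.arg / (2 * Real.pi)) (by positivity) ?_ ?_
    · rw [div_le_one (by positivity)]; linarith
    · rw [mul_div_cancel₀ _ (by positivity)]; exact h1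
  · refine key (c.arg / (2 * Real.pi) + 1) ?_ ?_ ?_
    · have : -1 ≤ c.arg / (2 * Real.pi) := by rw [le_div_iff₀ (by positivity)]; linarith
      linarith
    · have : c.arg / (2 * Real.pi) ≤ 0 := div_nonpos_of_nonpos_of_nonneg h.le (by positivity)
      linarith
    · rw [mul_add, mul_div_cancel₀ _ (by positivity), mul_one]
      push_cast
      rw [add_mul, Complex.exp_add, h1, Complex.exp_two_pi_mul_I, mul_one]

/-- Key claim: `z - q` has a log on `S`, up to at most one factor `z - p`. -/
theorem loop_index {p : ℂ} {α : ℝ → ℂ} {a b : ℝ} (hab : a < b) (hα : Continuous α)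
    (hends : Complex.exp (α a) = Complex.exp (α b)) (hne : α a ≠ α b)
    (hinj : ∀ s t, a ≤ s → s < t → t ≤ b → Complex.exp (α s) = Complex.exp (α t) → s = a ∧ t = b)
    {q : ℂ} (hq : q ∉ (fun t => p + Complex.exp (α t)) '' Icc a b) :
    ∃ k : ℤ, HasLog (fun z => (z - p) ^ k * (z - q))
      ((fun t => p + Complex.exp (α t)) '' Icc a b) := by
  classical
  set ψ : ℝ → ℂ := fun t => p + Complex.exp (α t) with hψ
  set S := ψ '' Icc a b with hS
  have hψc : Continuous ψ := by fun_prop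
  have hψe : ψ a = ψ b := by simp [hψ, hends]
  have hψi : ∀ s t, a ≤ s → s < t → t ≤ b → ψ s = ψ t → s = a ∧ t = b :=
    fun s t h1 h2 h3 h4 => hinj s t h1 h2 h3 (add_left_cancel h4)
  have hSc : IsCompact S := isCompact_Icc.image hψc
  have hScl := hSc.isClosed
  have hpS : p ∉ S := by
    rintro ⟨t, -, ht⟩
    exact Complex.exp_ne_zero (α t) (by simpa [hψ] using ht)
  by_contra hcon
  push Not at hcon
  have hn1 : ¬ HasLog (fun z => 1 * (z - q)) S := by simpa using hcon 0
  have hn2 : ¬ HasLog (fun z => (z - p) ^ (-1 : ℤ) * (z - q)) S := hcon (-1)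
  obtain ⟨n, hn⟩ := Complex.exp_eq_exp_iff_exists_int.mp hends.symm
  have hn0 : n ≠ 0 := by
    rintro rfl
    apply hne; simpa using hn.symm
  -- logarithm of `z - q` along the loop
  obtain ⟨L, hL, hLe⟩ := log_real (g := fun t => ψ (projIcc a b hab.le t) - q)
    ((hψc.comp (continuous_subtype_val.comp continuous_projIcc)).sub continuous_const)
    (fun t h0 => hq ⟨projIcc a b hab.le t, (projIcc a b hab.le t).2, sub_eq_zero.mp h0⟩)
  have hLe' : ∀ t ∈ Icc a b, ψ t - q = Complex.exp (L t) := fun t ht => by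
    have := hLe t
    simpa [projIcc_of_mem hab.le ht] using this
  have hLends : Complex.exp (L b) = Complex.exp (L a) := by
    rw [← hLe' a (left_mem_Icc.2 hab.le), ← hLe' b (right_mem_Icc.2 hab.le), hψe]
  obtain ⟨m, hm⟩ := Complex.exp_eq_exp_iff_exists_int.mp hLends
  obtain ⟨g, hg, hge⟩ := loop_desc (β := fun t => m * α t - n * L t) hψc.continuousOn hψi
    (by fun_prop) (by simp only [hn, hm]; ring)
  obtain ⟨l, hl, hlg⟩ := extend_continuousOn hScl hg
  have hrel : ∀ z ∈ S, (z - p) ^ m * Complex.exp (- l z) = (z - q) ^ n := by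
    rintro z ⟨t, ht, rfl⟩
    rw [hlg _ ⟨t, ht, rfl⟩, hge t ht, hLe' t ht]
    have : ψ t - p = Complex.exp (α t) := by simp [hψ]
    rw [this, ← Complex.exp_int_mul, ← Complex.exp_int_mul, ← Complex.exp_add]
    congr 1; ring
  set O : Set ℂ := {x | x ∉ S ∧ ¬ HasLog (fun z => 1 * (z - x)) S} ∩
    {x | x ∉ S ∧ ¬ HasLog (fun z => (z - p) ^ (-1 : ℤ) * (z - x)) S} with hO
  have hOo : IsOpen O := (isOpen_not_log hScl _).inter (isOpen_not_log hScl _)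
  have hOcl : closure O ⊆ O ∪ S := by
    have hU := (isOpen_log hScl (fun _ => 1)).union (isOpen_log hScl (fun z => (z - p) ^ (-1 : ℤ)))
    have : O ⊆ ({x | x ∉ S ∧ HasLog (fun z => 1 * (z - x)) S} ∪
      {x | x ∉ S ∧ HasLog (fun z => (z - p) ^ (-1 : ℤ) * (z - x)) S})ᶜ := by
      rintro x ⟨⟨h1, h2⟩, -, h3⟩ (⟨-, h4⟩ | ⟨-, h4⟩)
      · exact h2 h4
      · exact h3 h4
    intro x hx
    have hx' := closure_minimal this hU.isClosed_compl hx
    by_cases hxS : x ∈ S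
    · exact Or.inr hxS
    · left
      exact ⟨⟨hxS, fun h => hx' (Or.inl ⟨hxS, h⟩)⟩, hxS, fun h => hx' (Or.inr ⟨hxS, h⟩)⟩
  have hqO : q ∈ O := ⟨⟨hq, hn1⟩, hq, hn2⟩
  have hpO : p ∉ O := by
    rintro ⟨-, -, h⟩
    refine h ((HasLog.const one_ne_zero S).congr fun z hz => ?_)
    have : z - p ≠ 0 := sub_ne_zero.mpr (by rintro rfl; exact hpS hz)
    simp [this]
  have hfr : frontier O ⊆ S := by
    intro x hx
    rw [hOo.frontier_eq] at hx
    exact (hOcl hx.1).resolve_left hx.2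
  let w : ℂ → ℂ := fun z => if z ∈ O then (z - p) ^ m * Complex.exp (- l z) else (z - q) ^ n
  have hwc : Continuous w := by
    refine continuous_if (fun x hx => hrel x (hfr hx)) ?_ ?_
    · refine ContinuousOn.mul (ContinuousOn.zpow₀ (by fun_prop) _ fun x hx => Or.inl ?_)
        (by fun_prop)
      refine sub_ne_zero.mpr ?_
      rintro rfl
      exact (hOcl hx).elim hpO hpS
    · refine ContinuousOn.zpow₀ (by fun_prop) _ fun x hx => Or.inl ?_
      refine sub_ne_zero.mpr ?_
      rintro rfl
      have : closure {a | a ∉ O} = Oᶜ := hOo.isClosed_compl.closure_eq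
      rw [this] at hx
      exact hx hqO
  have hw0 : ∀ z, w z ≠ 0 := by
    intro z
    by_cases hz : z ∈ O
    · simp only [w, hz, if_true]
      exact mul_ne_zero (zpow_ne_zero _ (sub_ne_zero.mpr (by rintro rfl; exact hpO hz)))
        (Complex.exp_ne_zero _)
    · simp only [w, hz, if_false]
      exact zpow_ne_zero _ (sub_ne_zero.mpr (by rintro rfl; exact hz hqO))
  obtain ⟨lw, hlw, hlwe⟩ := log_univ hwc hw0
  obtain ⟨R, hR0, hR⟩ := hSc.isBounded.subset_ball_lt 0 q
  refine hn0 (no_log_sphere hR0 (c := q) ⟨lw, hlw.continuousOn, fun z hz => ?_⟩)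
  rw [← hlwe]
  have : z ∉ O := by
    rintro ⟨⟨-, h⟩, -⟩
    have := hasLog_far hR (q := z) (mem_sphere.mp hz).ge
    exact h (by simpa using this)
  simp only [w, this, if_false]

theorem rot_ne_one {n : ℕ} (hn : 1 ≤ n) : (Complex.exp Complex.I) ^ n ≠ 1 := by
  intro h
  rw [← Complex.exp_nat_mul] at h
  obtain ⟨k, hk⟩ := Complex.exp_eq_one_iff.mp h
  have hI := congrArg Complex.im hk
  simp at hI
  have hk0 : k ≠ 0 := by
    rintro rfl
    simp at hI; omega
  have : Real.pi = ((n : ℚ) / (2 * k) : ℚ) := by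
    push_cast
    have : (k : ℝ) ≠ 0 := by exact_mod_cast hk0
    field_simp
    linarith
  exact irrational_pi ⟨_, this.symm⟩

theorem exists_rot {K0 : Set ℂ} (hK : IsCompact K0) (hconn : IsConnected K0) (hu : ULC K0)
    {p : ℂ} (hp : p ∉ K0) (hnl : ¬ HasLog (fun z => z - p) K0) :
    ∃ f : ℂ → ℂ, ContinuousOn f {p}ᶜ ∧ (∀ z, z ≠ p → f z ∈ K0) ∧
      ∀ z, z ≠ p → ∀ n, 1 ≤ n → f^[n] z ≠ z := by
  obtain ⟨a, b, α, hab, hα, hαK, hends, hne, hinj⟩ := exists_simple_loop hK hconn hu hp hnl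
  have hidx := fun q => loop_index (p := p) (q := q) hab hα hends hne hinj
  set ψ : ℝ → ℂ := fun t => p + Complex.exp (α t) with hψ
  set S := ψ '' Icc a b with hS
  have hψc : Continuous ψ := by fun_prop
  have hψe : ψ a = ψ b := by simp [hψ, hends]
  have hψi : ∀ s t, a ≤ s → s < t → t ≤ b → ψ s = ψ t → s = a ∧ t = b :=
    fun s t h1 h2 h3 h4 => hinj s t h1 h2 h3 (add_left_cancel h4)
  have hSc : IsCompact S := isCompact_Icc.image hψc
  have hSK : S ⊆ K0 := by rintro _ ⟨t, ht, rfl⟩; exact hαK t ht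
  have hpS : p ∉ S := fun h => hp (hSK h)
  have hzp : ∀ z ∈ S, z - p ≠ 0 := fun z hz => sub_ne_zero.mpr (by rintro rfl; exact hpS hz)
  obtain ⟨v, hv, hve⟩ := loop_desc hψc.continuousOn hψi (circPar_cont a b).continuousOn
    (circPar_ends hab)
  obtain ⟨r, hr, hre⟩ := loop_desc (circPar_cont a b).continuousOn (circPar_inj hab)
    hψc.continuousOn hψe
  have hvn : ∀ z ∈ S, ‖v z‖ = 1 := by
    rintro _ ⟨t, ht, rfl⟩
    rw [hve t ht, circPar_norm]
  have hrS : ∀ c, ‖c‖ = 1 → r c ∈ S ∧ v (r c) = c := by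
    intro c hc
    obtain ⟨t, ht, rfl⟩ := circPar_surj hab hc
    rw [hre t ht, hve t ht]
    exact ⟨⟨t, ht, rfl⟩, rfl⟩
  obtain ⟨P, ε, hP, hPl⟩ := structure_thm hSc hv (fun z hz h0 => by
    have := hvn z hz; rw [h0] at this; simp at this)
  have hidx' : ∀ q, ∃ k : ℤ, q ∉ S → HasLog (fun z => (z - p) ^ k * (z - q)) S := by
    intro q
    by_cases hq : q ∈ S
    · exact ⟨0, fun h => (h hq).elim⟩
    · obtain ⟨k, hk⟩ := hidx q hq
      exact ⟨k, fun _ => hk⟩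
  choose k hk using hidx'
  have hlog1 := HasLog.prod P (u := fun q z => ((z - p) ^ (k q) * (z - q)) ^ (ε q))
    (fun q hq => (hk q (hP q hq)).zpow (ε q))
  set N : ℤ := ∑ q ∈ P, k q * ε q with hN
  have hlog2 : HasLog (fun z => v z * (z - p) ^ (-N)) S := by
    refine (hPl.mul hlog1.inv).congr fun z hz => ?_
    have h1 : ∏ q ∈ P, ((z - p) ^ (k q) * (z - q)) ^ (ε q) =
        (z - p) ^ N * ∏ q ∈ P, (z - q) ^ (ε q) := by
      simp only [mul_zpow]
      rw [Finset.prod_mul_distrib]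
      congr 1
      rw [hN]
      simp only [← zpow_mul]
      have hz0 := hzp z hz
      clear_value N
      clear hlog1 hPl hP hN
      induction P using Finset.induction_on with
      | empty => simp
      | insert q P hq ih => rw [Finset.prod_insert hq, Finset.sum_insert hq, zpow_add₀ hz0, ih]
    have h2 := hPl.ne_zero hz
    have h3 : ∏ q ∈ P, (z - q) ^ (ε q) ≠ 0 := right_ne_zero_of_mul h2
    have h4 : (z - p) ^ N ≠ 0 := zpow_ne_zero _ (hzp z hz)
    simp only [h1, zpow_neg]
    field_simp
  obtain ⟨l, hl, hle⟩ := hlog2.exists_continuous hSc.isClosed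
  set φ : ℂ → ℂ := fun z => Complex.exp (l z) * (z - p) ^ N with hφ
  have hφv : ∀ z ∈ S, φ z = v z := by
    intro z hz
    simp only [hφ, ← hle z hz, zpow_neg]
    have := zpow_ne_zero N (hzp z hz)
    field_simp
  have hφ0 : ∀ z, z ≠ p → φ z ≠ 0 := fun z hz =>
    mul_ne_zero (Complex.exp_ne_zero _) (zpow_ne_zero _ (sub_ne_zero.mpr hz))
  have hφc : ContinuousOn φ {p}ᶜ := by
    refine ContinuousOn.mul (by fun_prop) (ContinuousOn.zpow₀ (by fun_prop) _ fun x hx => Or.inl ?_)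
    exact sub_ne_zero.mpr hx
  set ρ := Complex.exp Complex.I with hρ
  have hρn : ‖ρ‖ = 1 := by
    have := Complex.norm_exp_ofReal_mul_I 1
    simpa using this
  have hn1 : ∀ z, z ≠ p → ‖ρ * (φ z / ‖φ z‖)‖ = 1 := by
    intro z hz
    have := norm_ne_zero_iff.mpr (hφ0 z hz)
    simp [hρn, this]
  refine ⟨fun z => r (ρ * (φ z / ‖φ z‖)), ?_, fun z hz => hSK (hrS _ (hn1 z hz)).1, ?_⟩
  · refine hr.comp (continuousOn_const.mul (hφc.div
      (Complex.continuous_ofReal.comp_continuousOn hφc.norm) ?_))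
      fun z hz => circPar_surj hab (hn1 z hz)
    intro z hz
    simpa using hφ0 z hz
  set f : ℂ → ℂ := fun z => r (ρ * (φ z / ‖φ z‖)) with hf
  have hfS : ∀ z, z ≠ p → f z ∈ S := fun z hz => (hrS _ (hn1 z hz)).1
  have hne_p : ∀ z ∈ S, z ≠ p := by rintro z hz rfl; exact hpS hz
  have hfv : ∀ z ∈ S, v (f z) = ρ * v z := by
    intro z hz
    rw [hf]
    simp only []
    rw [(hrS _ (hn1 z (hne_p z hz))).2, hφv z hz, hvn z hz]
    simp
  have hit : ∀ z ∈ S, ∀ n, f^[n] z ∈ S ∧ v (f^[n] z) = ρ ^ n * v z := by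
    intro z hz n
    induction n with
    | zero => simp [hz]
    | succ n ih =>
      rw [Function.iterate_succ_apply']
      refine ⟨hfS _ (hne_p _ ih.1), ?_⟩
      rw [hfv _ ih.1, ih.2, pow_succ]; ring
  intro z hz n hn h
  have hzS : z ∈ S := by
    obtain ⟨m, rfl⟩ : ∃ m, n = m + 1 := ⟨n - 1, by omega⟩
    rw [Function.iterate_succ_apply] at h
    rw [← h]
    exact (hit _ (hfS z hz) m).1
  have h1 := (hit z hzS n).2
  rw [h] at h1
  have hv0 : v z ≠ 0 := fun h0 => by
    have := hvn z hzS; rw [h0] at this; simp at this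
  refine rot_ne_one hn ?_
  have : (1 : ℂ) * v z = ρ ^ n * v z := by rw [one_mul]; exact h1
  exact (mul_right_cancel₀ hv0 this).symm

theorem HasFPP.of_homeo {Y Z : Type*} [TopologicalSpace Y] [TopologicalSpace Z] (e : Y ≃ₜ Z)
    (h : HasFPP Y) : HasFPP Z := by
  intro f hf
  obtain ⟨x, hx⟩ := h (fun y => e.symm (f (e y))) (by fun_prop)
  refine ⟨e x, ?_⟩
  have := congrArg e hx
  simpa using this

theorem HasLFPP.of_homeo {Y Z : Type*} [TopologicalSpace Y] [TopologicalSpace Z] (e : Y ≃ₜ Z)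
    (h : HasLFPP Y) : HasLFPP Z := by
  obtain ⟨T, hT, hB⟩ := h
  refine ⟨_, hT.isInducing e.symm.isInducing, ?_⟩
  rintro _ ⟨B, hBT, rfl⟩
  have h1 : e '' closure B = closure (e.symm ⁻¹' B) := by
    rw [e.image_closure, e.image_eq_preimage_symm]
  rw [← h1]
  exact (hB B hBT).of_homeo (e.image (closure B))

theorem HasWLPPP.of_homeo {Y Z : Type*} [TopologicalSpace Y] [TopologicalSpace Z] (e : Y ≃ₜ Z)
    (h : HasWLPPP Y) : HasWLPPP Z := by
  obtain ⟨T, hT, hB⟩ := h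
  refine ⟨_, hT.isInducing e.symm.isInducing, ?_⟩
  rintro _ ⟨B, hBT, rfl⟩ f hf hfB
  rw [← e.symm.preimage_closure] at hfB
  obtain ⟨x, hx, n, hn, hnx⟩ := hB B hBT (fun y => e.symm (f (e y))) (by fun_prop) (by
    rintro _ ⟨y, hy, rfl⟩
    exact hfB ⟨e y, by simpa using hy, rfl⟩)
  refine ⟨e x, by simpa using hx, n, hn, ?_⟩
  have hsc : Function.Semiconj e (fun y => e.symm (f (e y))) f := fun y => by simp
  rw [← (hsc.iterate_right n) x, hnx]

theorem main_complex (X : Set ℂ) (hcomp : IsCompact X)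
    (hlc : LocallyConnectedSpace ↥X) (h : HasWLPPP ↥X) : HasLFPP ↥X := by
  have hulcX := ulc_of_locallyConnected hcomp hlc
  obtain ⟨T, hT, hTB⟩ := h
  refine ⟨{B | IsOpen B ∧ HasFPP ↥(closure B)}, ?_, fun B hB => hB.2⟩
  refine TopologicalSpace.isTopologicalBasis_of_isOpen_of_nhds (fun B hB => hB.1) ?_
  intro x U hxU hU
  obtain ⟨B0, hB0T, hxB0, hB0U⟩ := hT.exists_subset_of_mem_open hxU hU
  obtain ⟨R, hR, hRB⟩ := Metric.isOpen_iff.mp (hT.isOpen hB0T) x hxB0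
  obtain ⟨W, hWX, hxW, hWo, hWc, hWb, hWu⟩ := small_nbhd hcomp hulcX x.2 (half_pos hR)
  set K0 := closure W with hK0
  have hK0X : K0 ⊆ X := closure_minimal hWX hcomp.isClosed
  have hK0c : IsCompact K0 := hcomp.of_isClosed_subset isClosed_closure hK0X
  have hK0b : K0 ⊆ ball (x : ℂ) R :=
    (closure_mono hWb).trans (closure_ball_subset_closedBall.trans
      (closedBall_subset_ball (by linarith)))
  have hK0conn : IsConnected K0 := ⟨⟨x, subset_closure hxW⟩, hWc.closure⟩
  have hXB : ∀ z (hz : z ∈ X), z ∈ ball (x : ℂ) R → (⟨z, hz⟩ : ↥X) ∈ B0 :=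
    fun z hz hzb => hRB hzb
  have hHX : Hull K0 ⊆ X := by
    rintro p (hp | ⟨hp, hnl⟩)
    · exact hK0X hp
    by_contra hpX
    obtain ⟨f, hf, hfK, hper⟩ := exists_rot hK0c hK0conn hWu hp hnl
    have hXp : ∀ z ∈ X, z ≠ p := by rintro z hz rfl; exact hpX hz
    let F : ↥X → ↥X := fun z => ⟨f z, hK0X (hfK z (hXp z z.2))⟩
    have hF : Continuous F := by
      refine Continuous.subtype_mk ?_ _
      exact hf.comp_continuous continuous_subtype_val fun z => hXp z z.2
    obtain ⟨y, -, n, hn, hy⟩ := hTB B0 hB0T F hF (by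
      rintro _ ⟨z, -, rfl⟩
      exact hXB _ _ (hK0b (hfK z (hXp z z.2))))
    refine hper y (hXp y y.2) n hn ?_
    have hsc : Function.Semiconj (Subtype.val : ↥X → ℂ) F f := fun z => rfl
    rw [← (hsc.iterate_right n) y, hy]
  set B : Set ↥X := Subtype.val ⁻¹' (W ∪ (Hull K0 \ K0)) with hB
  have hBo : IsOpen B := by
    rw [hB, preimage_union]
    refine IsOpen.union ?_ ((hull_diff_open isClosed_closure).preimage continuous_subtype_val)
    rw [Metric.isOpen_iff]
    intro y hy
    obtain ⟨δ, hδ, hd⟩ := hWo y hy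
    exact ⟨δ, hδ, fun z hz => hd z z.2 (by rw [dist_comm]; exact hz)⟩
  have hHcl : IsClosed (Hull K0) := hull_closed isClosed_closure
  have hBcl : closure B = Subtype.val ⁻¹' (Hull K0) := by
    apply subset_antisymm
    · refine closure_minimal (preimage_mono ?_) (hHcl.preimage continuous_subtype_val)
      exact union_subset (subset_closure.trans (subset_hull _)) sdiff_subset
    · intro y hy
      by_cases hyK : (y : ℂ) ∈ K0
      · rw [closure_subtype, hB, Subtype.image_preimage_coe]
        refine closure_mono ?_ hyK
        exact subset_inter hWX subset_union_left
      · exact subset_closure (Or.inr ⟨hy, hyK⟩)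
  refine ⟨B, ⟨hBo, ?_⟩, Or.inl hxW, ?_⟩
  · rw [hBcl]
    intro g hg
    classical
    let G : ℂ → ℂ := fun z => if hz : z ∈ Hull K0 then ((g ⟨⟨z, hHX hz⟩, hz⟩ : ↥X) : ℂ) else z
    have hGe : ∀ z (hz : z ∈ Hull K0), G z = ((g ⟨⟨z, hHX hz⟩, hz⟩ : ↥X) : ℂ) :=
      fun z hz => by simp only [G, hz, dif_pos]
    have hGc : ContinuousOn G (Hull K0) := by
      rw [continuousOn_iff_continuous_domRestrict]
      have : (Hull K0).domRestrict G = fun z : ↥(Hull K0) => ((g ⟨⟨z, hHX z.2⟩, z.2⟩ : ↥X) : ℂ) := by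
        ext z; exact hGe z z.2
      rw [this]
      refine continuous_subtype_val.comp (continuous_subtype_val.comp (hg.comp ?_))
      exact (Continuous.subtype_mk (Continuous.subtype_mk continuous_subtype_val _) _)
    obtain ⟨z, hz, hGz⟩ := fpp_thm (hull_compact hK0c) (hull_connected isClosed_closure hK0conn)
      (hull_ulc isClosed_closure hWu) (fun p hp => hull_log isClosed_closure hp) hGc
      (fun z hz => by rw [hGe z hz]; exact (g ⟨⟨z, hHX hz⟩, hz⟩).2)
    refine ⟨⟨⟨z, hHX hz⟩, hz⟩, ?_⟩
    apply Subtype.ext; apply Subtype.ext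
    rw [← hGe z hz]; exact hGz
  · refine Subset.trans ?_ hB0U
    intro y hy
    refine hRB ?_
    refine hull_subset_ball hK0b (?_ : (y : ℂ) ∈ Hull K0)
    rcases hy with hy | hy
    · exact subset_hull _ (subset_closure hy)
    · exact hy.1

/-- For a locally connected continuum in the plane, wLPPP implies LFPP. -/
theorem stmt_2 (X : Set (EuclideanSpace ℝ (Fin 2)))
    (hcomp : IsCompact X) (hconn : IsConnected X)
    (hlc : LocallyConnectedSpace ↥X)
    (h : HasWLPPP ↥X) : HasLFPP ↥X := by
  let e : EuclideanSpace ℝ (Fin 2) ≃ₜ ℂ :=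
    Complex.orthonormalBasisOneI.repr.symm.toHomeomorph
  let eX : ↥X ≃ₜ ↥(e '' X) := e.image X
  have hlc' : LocallyConnectedSpace ↥(e '' X) :=
    eX.symm.isOpenEmbedding.locallyConnectedSpace
  exact (main_complex (e '' X) (hcomp.image e.continuous) hlc' (h.of_homeo eX)).of_homeo eX.symm
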